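/- Let A, C, σ, Ra be strictly positive real parameters. Let f₁, …, f_p ∈ ℝ[x,y,z] be nonzero polynomials, λ₁, …, λ_p real numbers, g, h ∈ ℝ[x,y,z] coprime polynomials with h ≠ 0, and let U ⊆ ℝ³ be the open set where all f_i and h are nonvanishing. Define Φ : U → ℝ by Φ(p) = ∏ᵢ |fᵢ(p)|^{λᵢ} · exp(g(p)/h(p)). If Φ is a first integral of the Glukhovsky–Dolzhansky system, i.e., the directional derivative of Φ along the vector field (A y z + C z − σ x, −x z + Ra − y, −z + x y) vanishes at every point of U, then Φ is locally constant on U. In other words, the system admits no nonconstant Darboux first integral. -/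

import Mathlib

/-!
The logarithmic differential of a Darboux first integral is a closed `1`-form `ω` over the field of
rational functions that vanishes on the vector field. Any such form is zero.

Take `x² + A y²`, `y² + z²` and `y²` as coordinates. The dual derivations commute, and the
quadratic part of the vector field is `-2 x y z` times the third of them, denoted by `δ` below.
Expand `ω` at infinity into homogeneous parts. The components of the leading part are constants of
`δ`. The next part is closed, so its contraction with the Euler field is a primitive, and up to a
correction this gives a rational function `u` such that `x y z δ(u) = a + b y²`, where `a` and `b`
are constants that are linear in the leading part. Over the field of constants, `x`, `y` and `z`
are square roots of pairwise coprime linear polynomials in `y²`, so the form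
`(a + b t) dt / √(cubic in t)` is exact only if `a = b = 0`, as it is on an elliptic curve.
If `σ ≠ 1`, this makes the leading part vanish in every even degree; if `σ = 1`, in every even
degree other than `-2`, where one more part of the expansion has to be considered. In odd degree
the leading part vanishes by parity.
-/

open MvPolynomial

/-- The derivation associated with the Glukhovsky–Dolzhansky system
`ẋ = A y z + C z − σ x, ẏ = −x z + Ra − y, ż = −z + x y`,
acting on `ℝ[x,y,z]` (variables `X 0 = x`, `X 1 = y`, `X 2 = z`). -/
noncomputable def gdDeriv (A C σ Ra : ℝ) (f : MvPolynomial (Fin 3) ℝ) :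
    MvPolynomial (Fin 3) ℝ :=
  (MvPolynomial.C A * X 1 * X 2 + MvPolynomial.C C * X 2 - MvPolynomial.C σ * X 0) *
      pderiv (0 : Fin 3) f
    + (-(X 0 * X 2) + MvPolynomial.C Ra - X 1) * pderiv (1 : Fin 3) f
    + (-X 2 + X 0 * X 1) * pderiv (2 : Fin 3) f

section PolynomialODE

open Polynomial

variable {K : Type*} [Field K]

theorem exists_eq_pow_mul_and_mul_derivative_eq {π f : K[X]} (hπ : Prime π) (hf : f ≠ 0) :
    ∃ (m : ℕ) (e : K[X]), f = π ^ m * e ∧ ¬ π ∣ e ∧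
      π * derivative f = π ^ m * (m * derivative π * e + π * derivative e) := by
  obtain ⟨e, hfe, he⟩ :=
    (FiniteMultiplicity.of_prime_left hπ hf).exists_eq_pow_mul_and_not_dvd
  refine ⟨_, e, hfe, he, ?_⟩
  generalize multiplicity π f = m at hfe
  cases m with
  | zero => simp [hfe]
  | succ m =>
    rw [hfe, derivative_mul, derivative_pow_succ, map_add, map_natCast, map_one]
    push_cast
    ring

variable [CharZero K]

theorem isUnit_denominator_of_linear_ode {R q n s : K[X]} (hR : Squarefree R)
    (hns : IsCoprime n s) (hs : s ≠ 0)
    (h : derivative R * n * s + 2 * R * (derivative n * s - n * derivative s) = q * s ^ 2) :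
    IsUnit s := by
  by_contra hu
  obtain ⟨π, hirr, hdvd⟩ := WfDvdMonoid.exists_irreducible_factor hu hs
  have hπ : Prime π := hirr.prime
  obtain ⟨j, a, hRa, ha, hR'⟩ := exists_eq_pow_mul_and_mul_derivative_eq hπ hR.ne_zero
  obtain ⟨m, e, hse, he, hs'⟩ := exists_eq_pow_mul_and_mul_derivative_eq hπ hs
  have hj : j ≤ 1 := by
    by_contra! hj
    exact hπ.not_isUnit (hR π (by rw [hRa, ← sq]; exact (pow_dvd_pow π hj).mul_right a))
  have hm : 1 ≤ m := by
    by_contra! hm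
    rw [hse, Nat.lt_one_iff.1 hm, pow_zero, one_mul] at hdvd
    exact he hdvd
  have hn : ¬ π ∣ n := fun h => hπ.not_isUnit (hns.isUnit_of_dvd' h hdvd)
  have hπ' : ¬ π ∣ derivative π := fun h =>
    hπ.not_isUnit (hirr.separable.isUnit_of_dvd' dvd_rfl h)
  have hjm : (j - 2 * m : K) ≠ 0 := by
    rw [sub_ne_zero]
    exact_mod_cast (by omega : j ≠ 2 * m)
  have hdvd' : π ∣ Polynomial.C (j - 2 * m : K) * derivative π * a * n * e := by
    obtain ⟨i, rfl⟩ := Nat.exists_eq_add_of_le (hj.trans hm)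
    refine ⟨q * π ^ i * e ^ 2 - derivative a * n * e
      - 2 * a * (derivative n * e - n * derivative e), ?_⟩
    apply mul_left_cancel₀ (pow_ne_zero (j + (j + i)) hπ.ne_zero)
    simp only [hRa, hse] at h hR' hs'
    simp only [map_sub, map_mul, map_natCast, map_ofNat]
    linear_combination π * h - n * π ^ (j + i) * e * hR' + 2 * π ^ j * a * n * hs'
  simp only [hπ.dvd_mul, ha, hn, he, hπ', or_false] at hdvd'
  exact hπ.not_isUnit (isUnit_of_dvd_unit hdvd' (isUnit_C.2 hjm.isUnit))

theorem numerator_eq_zero_of_linear_ode {R q n s : K[X]} (hR : Squarefree R)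
    (hns : IsCoprime n s) (hs : s ≠ 0)
    (h : derivative R * n * s + 2 * R * (derivative n * s - n * derivative s) = q * s ^ 2)
    (hqR : q.degree < (derivative R).degree) : n = 0 := by
  obtain ⟨c, hc, rfl⟩ := isUnit_iff.1 (isUnit_denominator_of_linear_ode hR hns hs h)
  by_contra hn
  have hder : derivative (n ^ 2 * R) = Polynomial.C c * q * n := by
    apply mul_left_cancel₀ hs
    simp only [derivative_C, derivative_mul, derivative_pow, Nat.cast_ofNat, map_ofNat,
      Nat.add_one_sub_one, pow_one] at h ⊢
    linear_combination n * h
  have hR0 : R.natDegree ≠ 0 := fun h0 => by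
    simp [derivative_of_natDegree_zero h0] at hqR
  have hdeg : (n ^ 2 * R).natDegree = 2 * n.natDegree + R.natDegree := by
    rw [natDegree_mul (pow_ne_zero 2 hn) hR.ne_zero, natDegree_pow]
  have hder_deg := degree_derivative (p := n ^ 2 * R) (by omega)
  rw [hder, hdeg, degree_mul, degree_C_mul hc.ne_zero, degree_eq_natDegree hn] at hder_deg
  have hq : q ≠ 0 := fun h0 => by simp [h0] at hder_deg
  rw [degree_derivative hR0, degree_eq_natDegree hq] at hqR
  rw [degree_eq_natDegree hq] at hder_deg
  norm_cast at hder_deg hqR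
  omega

theorem derivative_numerator_eq_zero_of_derivative_div_eq_zero {n s : K[X]}
    (hns : IsCoprime n s) (hs : s ≠ 0) (h : derivative n * s - n * derivative s = 0) :
    IsUnit s ∧ derivative n = 0 := by
  have hu : IsUnit s := isUnit_denominator_of_linear_ode (R := 1) (q := 0) squarefree_one hns hs
    (by simp [h])
  obtain ⟨c, hc, rfl⟩ := isUnit_iff.1 hu
  refine ⟨hu, ?_⟩
  simpa [hc.ne_zero] using h

end PolynomialODE

section FieldGenerators

variable {K E : Type*} [Field K] [Field E] [Algebra K E]

theorem algHom_eqOn_adjoin {F : Type*} [Field F] [Algebra K F] {φ ψ : E →ₐ[K] F} {S : Set E}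
    (h : S.EqOn φ ψ) : Set.EqOn φ ψ (IntermediateField.adjoin K S) := fun u hu => by
  induction hu using IntermediateField.adjoin_induction with
  | mem u hu => exact h hu
  | algebraMap r => simp
  | add u v _ _ hu hv => simp only [map_add, hu, hv]
  | mul u v _ _ hu hv => simp only [map_mul, hu, hv]
  | inv u _ hu => simp only [map_inv₀, hu]

theorem derivation_map_eq_mul_map {F : Type*} [Field F] [Algebra K F] {S : Set E}
    (hS : IntermediateField.adjoin K S = ⊤) (φ : E →ₐ[K] F) (D : Derivation K E E)
    (D' : Derivation K F F) (c : F) (h : ∀ u ∈ S, D' (φ u) = c * φ (D u)) (u : E) :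
    D' (φ u) = c * φ (D u) := by
  have hu : u ∈ IntermediateField.adjoin K S := hS ▸ IntermediateField.mem_top
  induction hu using IntermediateField.adjoin_induction with
  | mem u hu => exact h u hu
  | algebraMap r => simp
  | add u v _ _ hu hv => simp only [map_add, hu, hv, mul_add]
  | mul u v _ _ hu hv =>
    simp only [map_mul, map_add, Derivation.leibniz, smul_eq_mul, hu, hv]
    ring
  | inv u _ hu =>
    simp only [map_inv₀, Derivation.leibniz_inv, smul_eq_mul, map_mul, map_neg, map_pow, hu]
    ring

theorem derivation_ext {S : Set E} (hS : IntermediateField.adjoin K S = ⊤)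
    {D D' : Derivation K E E} (h : S.EqOn D D') : D = D' :=
  Derivation.ext fun u => by
    simpa using derivation_map_eq_mul_map hS (AlgHom.id K E) D' D 1 (fun u hu => by simp [h hu]) u

theorem exists_eq_add_mul_of_mem_adjoin_simple (L : IntermediateField K E) {x : E}
    (hx : x ^ 2 ∈ L) {u : E} (hu : u ∈ IntermediateField.adjoin L {x}) :
    ∃ a ∈ L, ∃ b ∈ L, u = a + b * x := by
  let f : Polynomial L := .X ^ 2 - .C ⟨x ^ 2, hx⟩
  have hf : f.Monic := Polynomial.monic_X_pow_sub_C _ two_ne_zero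
  have hfx : Polynomial.aeval x f = 0 := by simp [f]
  have hfdeg : f.natDegree = 2 := Polynomial.natDegree_X_pow_sub_C
  have hint : IsIntegral L x := ⟨f, hf, hfx⟩
  rw [← IntermediateField.mem_toSubalgebra,
    IntermediateField.adjoin_simple_toSubalgebra_of_isAlgebraic hint.isAlgebraic,
    Algebra.adjoin_singleton_eq_range_aeval] at hu
  obtain ⟨q, rfl⟩ := hu
  obtain ⟨b, a, hab⟩ := Polynomial.exists_eq_X_add_C_of_natDegree_le_one (p := q %ₘ f) (by
    have := Polynomial.natDegree_modByMonic_lt q hf (by rintro h; simp [h] at hfdeg)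
    omega)
  refine ⟨a, a.2, b, b.2, ?_⟩
  rw [AlgHom.toRingHom_eq_coe, RingHom.coe_coe,
    ← Polynomial.aeval_modByMonic_eq_self_of_root hfx, hab]
  simp [add_comm]

end FieldGenerators

section CommutingInvolutions

theorem submodule_le_of_common_eigenvectors_mem {k M ι : Type*} [Field k] [NeZero (2 : k)]
    [AddCommGroup M] [Module k M] [Finite ι] {σ : ι → M →ₗ[k] M}
    (hσσ : ∀ i u, σ i (σ i u) = u) (hcomm : ∀ i j u, σ i (σ j u) = σ j (σ i u))
    {W W₀ : Submodule k M} (hW : ∀ i, ∀ u ∈ W, σ i u ∈ W)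
    (h : ∀ u ∈ W, (∀ i, σ i u = u ∨ σ i u = -u) → u ∈ W₀) : W ≤ W₀ := by
  classical
  cases nonempty_fintype ι
  suffices H : ∀ T : Finset ι, ∀ u ∈ W, (∀ i ∉ T, σ i u = u ∨ σ i u = -u) → u ∈ W₀ from
    fun u hu => H Finset.univ u hu (by simp)
  intro T
  induction T using Finset.induction with
  | empty => simpa using h
  | insert i T _ ih =>
    intro u hu hT
    have hsplit : u = (2⁻¹ : k) • ((u + σ i u) + (u - σ i u)) := by
      rw [add_add_sub_cancel, ← two_smul k u, inv_smul_smul₀ two_ne_zero]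
    rw [hsplit]
    refine W₀.smul_mem _ (W₀.add_mem (ih _ (W.add_mem hu (hW i u hu)) fun j hj => ?_)
      (ih _ (W.sub_mem hu (hW i u hu)) fun j hj => ?_))
    all_goals
      rcases eq_or_ne j i with rfl | hji
      · simp [hσσ, add_comm]
      · simp only [map_add, map_sub, hcomm j i]
        rcases hT j (by simp [hji, hj]) with h | h
        · simp [h]
        · exact .inr (by rw [h, map_neg]; abel)

end CommutingInvolutions

/-- A field `E` generated over `K` by an element `t` and square roots `x i` of polynomials `p i` in
`t`. The derivation `d` with `d t = 1`, which makes `t` transcendental over `K`, and the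
automorphisms `sign i` that change the sign of the single root `x i` are data. -/
structure MultiquadraticExtension (K E ι : Type*) [Field K] [Field E] [Algebra K E]
    [Fintype ι] where
  t : E
  d : Derivation K E E
  d_t : d t = 1
  x : ι → E
  p : ι → Polynomial K
  x_sq : ∀ i, x i ^ 2 = Polynomial.aeval t (p i)
  natDegree_ne_zero : ∀ i, (p i).natDegree ≠ 0
  squarefree_prod : Squarefree (∏ i, p i)
  sign : ι → E →ₐ[K] E
  sign_t : ∀ i, sign i t = t
  sign_x_self : ∀ i, sign i (x i) = -x i
  sign_x_of_ne : ∀ i j, j ≠ i → sign i (x j) = x j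
  adjoin_eq_top : IntermediateField.adjoin K (insert t (Set.range x)) = ⊤

namespace MultiquadraticExtension

open Polynomial IntermediateField

variable {K E ι : Type*} [Field K] [Field E] [Algebra K E] [Fintype ι]
  (M : MultiquadraticExtension K E ι)

theorem d_aeval (q : K[X]) : M.d (aeval M.t q) = aeval M.t (derivative q) := by
  rw [Derivation.map_aeval, M.d_t, smul_eq_mul, mul_one]

theorem p_ne_zero (i : ι) : M.p i ≠ 0 := fun h => M.natDegree_ne_zero i (by simp [h])

theorem sign_x_eq_or_eq_neg (i j : ι) : M.sign i (M.x j) = M.x j ∨ M.sign i (M.x j) = -M.x j := by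
  rcases eq_or_ne j i with rfl | hj
  · exact .inr (M.sign_x_self j)
  · exact .inl (M.sign_x_of_ne i j hj)

theorem sign_sign (i : ι) (u : E) : M.sign i (M.sign i u) = u := by
  have h : Set.EqOn ((M.sign i).comp (M.sign i)) (AlgHom.id K E)
      (adjoin K (insert M.t (Set.range M.x))) := by
    refine algHom_eqOn_adjoin ?_
    rintro _ (rfl | ⟨j, rfl⟩)
    · simp [M.sign_t]
    · rcases M.sign_x_eq_or_eq_neg i j with h | h <;> simp [h]
  exact h (M.adjoin_eq_top ▸ mem_top)

theorem sign_comm (i j : ι) (u : E) : M.sign i (M.sign j u) = M.sign j (M.sign i u) := by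
  have h : Set.EqOn ((M.sign i).comp (M.sign j)) ((M.sign j).comp (M.sign i))
      (adjoin K (insert M.t (Set.range M.x))) := by
    refine algHom_eqOn_adjoin ?_
    rintro _ (rfl | ⟨l, rfl⟩)
    · simp [M.sign_t]
    · rcases M.sign_x_eq_or_eq_neg i l with hi | hi <;>
        rcases M.sign_x_eq_or_eq_neg j l with hj | hj <;> simp [hi, hj]
  exact h (M.adjoin_eq_top ▸ mem_top)

theorem sign_aeval (i : ι) (q : K[X]) : M.sign i (aeval M.t q) = aeval M.t q := by
  rw [← Polynomial.aeval_algHom_apply, M.sign_t]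

theorem two_mul_x_mul_d_x (i : ι) :
    2 * M.x i * M.d (M.x i) = aeval M.t (derivative (M.p i)) := by
  rw [← d_aeval, ← M.x_sq, Derivation.leibniz_pow]
  simp [mul_assoc]

/-- The products of the square roots, which form a basis of `E` over `K(t)` consisting of common
eigenvectors of the automorphisms `M.sign i`. -/
def monomial (S : Finset ι) : E := ∏ i ∈ S, M.x i

theorem monomial_sq (S : Finset ι) : M.monomial S ^ 2 = aeval M.t (∏ i ∈ S, M.p i) := by
  simp only [monomial, ← Finset.prod_pow, M.x_sq, map_prod]

theorem two_mul_monomial_mul_d_monomial (S : Finset ι) :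
    2 * M.monomial S * M.d (M.monomial S) = aeval M.t (derivative (∏ i ∈ S, M.p i)) := by
  rw [← d_aeval, ← M.monomial_sq, Derivation.leibniz_pow]
  simp [mul_assoc]

theorem sign_monomial_of_mem {S : Finset ι} {i : ι} (hi : i ∈ S) :
    M.sign i (M.monomial S) = -M.monomial S := by
  classical
  rw [monomial, ← Finset.mul_prod_erase S M.x hi, map_mul, map_prod, M.sign_x_self,
    Finset.prod_congr rfl fun j hj => M.sign_x_of_ne i j (Finset.ne_of_mem_erase hj), neg_mul]

theorem sign_monomial_of_notMem {S : Finset ι} {i : ι} (hi : i ∉ S) :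
    M.sign i (M.monomial S) = M.monomial S := by
  rw [monomial, map_prod]
  exact Finset.prod_congr rfl fun j hj => M.sign_x_of_ne i j (ne_of_mem_of_not_mem hj hi)

theorem squarefree_prod_p (S : Finset ι) : Squarefree (∏ i ∈ S, M.p i) :=
  M.squarefree_prod.squarefree_of_dvd (Finset.prod_dvd_prod_of_subset _ _ _ S.subset_univ)

variable [CharZero K]

theorem aeval_eq_zero_iff {q : K[X]} : aeval M.t q = 0 ↔ q = 0 := by
  refine ⟨fun h => ?_, fun h => by rw [h, map_zero]⟩
  induction hn : q.natDegree using Nat.strong_induction_on generalizing q with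
  | _ n ih =>
    rcases Nat.eq_zero_or_pos n with rfl | hpos
    · rw [eq_C_of_natDegree_eq_zero hn] at h ⊢
      simpa using h
    · have hder := ih _ (hn ▸ natDegree_derivative_lt (by omega)) (q := derivative q)
        (by rw [← d_aeval, h, map_zero]) rfl
      exact absurd (derivative_eq_zero.1 hder) (by omega)

theorem aeval_injective : Function.Injective (Polynomial.aeval (R := K) M.t) :=
  (injective_iff_map_eq_zero _).2 fun _ => M.aeval_eq_zero_iff.1

theorem x_ne_zero (i : ι) : M.x i ≠ 0 := fun h =>
  M.p_ne_zero i (M.aeval_eq_zero_iff.1 (by rw [← M.x_sq, h, zero_pow two_ne_zero]))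

theorem d_sign (i : ι) (u : E) : M.d (M.sign i u) = M.sign i (M.d u) := by
  have : CharZero E := charZero_of_injective_algebraMap (algebraMap K E).injective
  refine (derivation_map_eq_mul_map M.adjoin_eq_top (M.sign i) M.d M.d 1 ?_ u).trans (one_mul _)
  rintro _ (rfl | ⟨j, rfl⟩)
  · simp [M.sign_t, M.d_t]
  · have h := congrArg (M.sign i) (M.two_mul_x_mul_d_x j)
    rw [M.sign_aeval, ← M.two_mul_x_mul_d_x j, map_mul, map_mul, map_ofNat] at h
    rw [one_mul]
    apply mul_left_cancel₀ (mul_ne_zero two_ne_zero (M.x_ne_zero j))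
    rcases M.sign_x_eq_or_eq_neg i j with hj | hj <;> rw [hj] at h ⊢
    · exact h.symm
    · rw [map_neg]
      linear_combination h

theorem mem_adjoin_t_of_sign_eq {u : E} (hu : ∀ i, M.sign i u = u) : u ∈ adjoin K {M.t} := by
  classical
  suffices H : ∀ S : Finset ι, u ∈ adjoin K (insert M.t (M.x '' S)) → u ∈ adjoin K {M.t} from
    H Finset.univ (by simp [M.adjoin_eq_top])
  intro S
  induction S using Finset.induction with
  | empty => simp
  | insert i S hi ih =>
    intro hmem
    set L := adjoin K (insert M.t (M.x '' S))
    have hsq : M.x i ^ 2 ∈ L := by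
      rw [M.x_sq]
      exact adjoin.mono K _ _ (Set.singleton_subset_iff.2 (Set.mem_insert _ _))
        (algebra_adjoin_le_adjoin K _ (aeval_mem_adjoin_singleton K M.t))
    have hfix : Set.EqOn (M.sign i) (AlgHom.id K E) L := algHom_eqOn_adjoin (by
      rintro _ (rfl | ⟨j, hj, rfl⟩)
      · exact M.sign_t i
      · exact M.sign_x_of_ne i j (by rintro rfl; exact hi hj))
    have hmem' : u ∈ adjoin L {M.x i} := by
      rw [← mem_restrictScalars (K := K), adjoin_adjoin_left]
      simpa [Set.image_insert_eq, Set.insert_comm] using hmem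
    obtain ⟨a, ha, b, hb, rfl⟩ := exists_eq_add_mul_of_mem_adjoin_simple L hsq hmem'
    refine ih ?_
    have hba : b * M.x i = 0 := by
      have hsign := hu i
      rw [map_add, map_mul, hfix ha, hfix hb, M.sign_x_self, AlgHom.id_apply,
        AlgHom.id_apply] at hsign
      have := charZero_of_injective_algebraMap (algebraMap K E).injective
      rw [← mul_right_inj' (two_ne_zero (α := E))]
      linear_combination -hsign
    rwa [hba, add_zero]

theorem exists_isCoprime_mul_aeval_eq_of_sign_eq {u : E} (hu : ∀ i, M.sign i u = u) :
    ∃ n s : K[X], IsCoprime n s ∧ s ≠ 0 ∧ u * aeval M.t s = aeval M.t n := by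
  obtain ⟨n, s, rfl⟩ := mem_adjoin_simple_iff K u |>.1 (M.mem_adjoin_t_of_sign_eq hu)
  rcases eq_or_ne s 0 with rfl | hs
  · exact ⟨0, 1, isCoprime_one_right, one_ne_zero, by simp⟩
  classical
  let _ := UniqueFactorizationMonoid.toGCDMonoid K[X]
  obtain ⟨n', s', hn, hs', hu⟩ := extract_gcd n s
  have hgs : gcd n s * s' ≠ 0 := hs' ▸ hs
  refine ⟨n', s', (gcd_isUnit_iff n' s').1 hu, right_ne_zero_of_mul hgs, ?_⟩
  generalize gcd n s = g at hn hs' hgs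
  subst hn hs'
  have hg := M.aeval_eq_zero_iff.not.2 (left_ne_zero_of_mul hgs)
  have hs0 := M.aeval_eq_zero_iff.not.2 (right_ne_zero_of_mul hgs)
  rw [map_mul, map_mul]
  field_simp

theorem monomial_ne_zero (S : Finset ι) : M.monomial S ≠ 0 :=
  Finset.prod_ne_zero_iff.2 fun i _ => M.x_ne_zero i

theorem exists_ode_of_eigenvector {S : Finset ι} {v : E} (hS : ∀ i ∈ S, M.sign i v = -v)
    (hS' : ∀ i ∉ S, M.sign i v = v) :
    ∃ n s : K[X], IsCoprime n s ∧ s ≠ 0 ∧ v * aeval M.t s = aeval M.t n * M.monomial S ∧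
      2 * M.monomial S * M.d v * aeval M.t s ^ 2 =
        aeval M.t (derivative (∏ i ∈ S, M.p i) * n * s +
          2 * (∏ i ∈ S, M.p i) * (derivative n * s - n * derivative s)) := by
  obtain ⟨n, s, hns, hs, h⟩ := M.exists_isCoprime_mul_aeval_eq_of_sign_eq (u := v / M.monomial S)
    fun i => by
      by_cases hi : i ∈ S
      · rw [map_div₀, hS i hi, M.sign_monomial_of_mem hi, neg_div_neg_eq]
      · rw [map_div₀, hS' i hi, M.sign_monomial_of_notMem hi]
  have hv : v * aeval M.t s = aeval M.t n * M.monomial S := by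
    rw [← h, mul_right_comm, div_mul_cancel₀ _ (M.monomial_ne_zero S)]
  refine ⟨n, s, hns, hs, hv, ?_⟩
  have hd := congrArg M.d hv
  simp only [Derivation.leibniz, smul_eq_mul, d_aeval] at hd
  simp only [map_add, map_sub, map_mul, map_ofNat, ← M.two_mul_monomial_mul_d_monomial,
    ← M.monomial_sq S]
  linear_combination 2 * M.monomial S * aeval M.t s * hd -
    2 * M.monomial S * aeval M.t (derivative s) * hv

theorem eq_zero_of_eigenvector {S : Finset ι} {v : E} {q : K[X]} (hS : ∀ i ∈ S, M.sign i v = -v)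
    (hS' : ∀ i ∉ S, M.sign i v = v) (hq : q.degree < (derivative (∏ i ∈ S, M.p i)).degree)
    (hv : M.monomial S * M.d v = aeval M.t q) : v = 0 := by
  obtain ⟨n, s, hns, hs, hvn, hode⟩ := M.exists_ode_of_eigenvector hS hS'
  rw [mul_assoc 2, hv] at hode
  have hpoly : derivative (∏ i ∈ S, M.p i) * n * s +
      2 * (∏ i ∈ S, M.p i) * (derivative n * s - n * derivative s) = 2 * q * s ^ 2 :=
    M.aeval_injective (by rw [← hode, map_mul, map_mul, map_pow, map_ofNat])
  have hq2 : ((2 : K[X]) * q).degree < (derivative (∏ i ∈ S, M.p i)).degree :=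
    (degree_C_mul (p := q) (two_ne_zero (α := K))).trans_lt hq
  rw [numerator_eq_zero_of_linear_ode (M.squarefree_prod_p S) hns hs hpoly hq2, map_zero,
    zero_mul] at hvn
  exact (mul_eq_zero.1 hvn).resolve_right (M.aeval_eq_zero_iff.not.2 hs)

theorem d_eq_zero_of_common_eigenvector {S : Finset ι} {v : E} {q : K[X]}
    (hv : ∀ i, M.sign i v = v ∨ M.sign i v = -v)
    (hq : q.degree < (derivative (∏ i ∈ S, M.p i)).degree)
    (h : M.monomial S * M.d v = aeval M.t q) : M.d v = 0 := by
  have hE : CharZero E := charZero_of_injective_algebraMap (algebraMap K E).injective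
  by_contra hd
  have hd' : M.d v ≠ -M.d v := fun h => hd (self_eq_neg.1 h)
  have hsign (i : ι) : M.sign i (M.monomial S) * M.d (M.sign i v) = M.monomial S * M.d v := by
    rw [M.d_sign, ← map_mul, h, M.sign_aeval]
  suffices v = 0 from hd (by rw [this, map_zero])
  refine M.eq_zero_of_eigenvector (S := S) (fun i hi => ?_) (fun i hi => ?_) hq h
  · refine (hv i).resolve_left fun hi' => hd' (mul_left_cancel₀ (M.monomial_ne_zero S) ?_)
    rw [mul_neg, ← neg_mul, ← M.sign_monomial_of_mem hi, ← hsign i, hi']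
  · refine (hv i).resolve_right fun hi' => hd' (mul_left_cancel₀ (M.monomial_ne_zero S) ?_)
    rw [← hsign i, hi', M.sign_monomial_of_notMem hi, map_neg]

theorem eq_zero_of_monomial_mul_d_eq_aeval {S : Finset ι} {u : E} {q : K[X]}
    (hq : q.degree < (derivative (∏ i ∈ S, M.p i)).degree)
    (hu : M.monomial S * M.d u = aeval M.t q) : q = 0 := by
  let W : Submodule K E := (Submodule.span K {aeval M.t q}).comap
    ((LinearMap.mulLeft K (M.monomial S)).comp M.d.toLinearMap)
  have hW (v : E) : v ∈ W ↔ ∃ c : K, M.monomial S * M.d v = aeval M.t (Polynomial.C c * q) := by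
    simp [W, Submodule.mem_span_singleton, eq_comm, Algebra.smul_def]
  have hle : W ≤ LinearMap.ker M.d.toLinearMap := by
    refine submodule_le_of_common_eigenvectors_mem (σ := fun i => (M.sign i).toLinearMap)
      M.sign_sign M.sign_comm (fun i v hv => ?_) fun v hv hvi => ?_
    · obtain ⟨c, hc⟩ := (hW v).1 hv
      have hsign := congrArg (M.sign i) hc
      rw [map_mul, M.sign_aeval, ← M.d_sign] at hsign
      by_cases hi : i ∈ S
      · refine (hW _).2 ⟨-c, ?_⟩
        rw [M.sign_monomial_of_mem hi, neg_mul] at hsign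
        rw [Polynomial.C_neg, neg_mul, map_neg, ← hsign, neg_neg]
        rfl
      · refine (hW _).2 ⟨c, ?_⟩
        rwa [M.sign_monomial_of_notMem hi] at hsign
    · obtain ⟨c, hc⟩ := (hW v).1 hv
      refine M.d_eq_zero_of_common_eigenvector hvi (lt_of_le_of_lt ?_ hq) hc
      exact (smul_eq_C_mul c (p := q)) ▸ degree_smul_le c q
  have hd : M.d u = 0 := hle ((hW u).2 ⟨1, by simpa using hu⟩)
  rwa [hd, mul_zero, eq_comm, M.aeval_eq_zero_iff] at hu

theorem exists_algebraMap_eq_of_d_eq_zero_of_sign_eq {v : E} (hd : M.d v = 0)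
    (hv : ∀ i, M.sign i v = v) : ∃ c : K, algebraMap K E c = v := by
  obtain ⟨n, s, hns, hs, hvn, hode⟩ := M.exists_ode_of_eigenvector (S := ∅) (by simp)
    fun i _ => hv i
  rw [monomial, Finset.prod_empty, mul_one] at hvn
  rw [Finset.prod_empty, derivative_one, hd, mul_zero, zero_mul, zero_mul, zero_mul, zero_add,
    mul_one, eq_comm, M.aeval_eq_zero_iff, mul_eq_zero] at hode
  obtain ⟨hs, hn⟩ := derivative_numerator_eq_zero_of_derivative_div_eq_zero hns hs
    (hode.resolve_left two_ne_zero)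
  obtain ⟨a, ha, rfl⟩ := isUnit_iff.1 hs
  rw [eq_C_of_natDegree_eq_zero (derivative_eq_zero.1 hn), Polynomial.aeval_C,
    Polynomial.aeval_C] at hvn
  refine ⟨n.coeff 0 / a, ?_⟩
  rw [map_div₀, div_eq_iff (by simpa using ha.ne_zero), hvn]

theorem exists_algebraMap_eq_of_d_eq_zero {u : E} (hu : M.d u = 0) :
    ∃ c : K, algebraMap K E c = u := by
  classical
  suffices hle : LinearMap.ker M.d.toLinearMap ≤ LinearMap.range (Algebra.linearMap K E) from
    hle hu
  refine submodule_le_of_common_eigenvectors_mem (σ := fun i => (M.sign i).toLinearMap)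
      M.sign_sign M.sign_comm (fun i v hv => ?_) fun v hv hvi => ?_
  · change M.d (M.sign i v) = 0
    rw [M.d_sign, show M.d v = 0 from hv, map_zero]
  change M.d v = 0 at hv
  let S : Finset ι := {i | M.sign i v = -v}
  have hS' : ∀ i ∉ S, M.sign i v = v := fun i hi => (hvi i).resolve_right (by simpa [S] using hi)
  rcases S.eq_empty_or_nonempty with hempty | ⟨i, hi⟩
  · exact M.exists_algebraMap_eq_of_d_eq_zero_of_sign_eq hv fun i => hS' i (by simp [hempty])
  · suffices v = 0 by simp [this]
    refine M.eq_zero_of_eigenvector (S := S) (q := 0) (by simp [S]) hS' ?_ (by simp [hv])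
    have hnat : (∏ i ∈ S, M.p i).natDegree ≠ 0 := by
      rw [natDegree_prod _ _ fun i _ => M.p_ne_zero i, Ne, Finset.sum_eq_zero_iff]
      exact fun h => M.natDegree_ne_zero i (h i hi)
    rw [degree_zero, bot_lt_iff_ne_bot, Ne, degree_eq_bot, derivative_eq_zero]
    exact hnat

end MultiquadraticExtension

section FractionDerivation

theorem derivation_sum_apply {k R M ι : Type*} [CommSemiring k] [CommSemiring R] [AddCommMonoid M]
    [Algebra k R] [Module R M] [Module k M] (D : ι → Derivation k R M) (s : Finset ι) (u : R) :
    (∑ i ∈ s, D i) u = ∑ i ∈ s, D i u := by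
  rw [← Derivation.coeFnAddMonoidHom_apply, map_sum, Finset.sum_apply]
  rfl

variable {k R : Type*} (E : Type*) [CommRing k] [CommRing R] [Algebra k R] [Field E]
  [Algebra k E] [Algebra R E] [IsScalarTower k R E] [IsFractionRing R E]

/-- The extension of a derivation of an integral domain `R` to its field of fractions `E`. -/
noncomputable def fractionDerivation (D : Derivation k R R) : Derivation k E E :=
  have := Algebra.FormallyEtale.of_isLocalization (Rₘ := E) (nonZeroDivisors R)
  ((KaehlerDifferential.isBaseChange_of_formallyEtale k R E).lift
    ((Algebra.linearMap R E).comp D.liftKaehlerDifferential)).compDer (KaehlerDifferential.D k E)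

theorem fractionDerivation_algebraMap (D : Derivation k R R) (f : R) :
    fractionDerivation E D (algebraMap R E f) = algebraMap R E (D f) := by
  have := Algebra.FormallyEtale.of_isLocalization (Rₘ := E) (nonZeroDivisors R)
  have h := (KaehlerDifferential.isBaseChange_of_formallyEtale k R E).lift_eq
    ((Algebra.linearMap R E).comp D.liftKaehlerDifferential) (KaehlerDifferential.D k R f)
  rw [KaehlerDifferential.map_D, LinearMap.comp_apply, D.liftKaehlerDifferential_comp_D] at h
  exact h

end FractionDerivation

section LaurentExpansion

/-- The coefficientwise structure, to be preferred to the instance `HahnSeries.powerSeriesAlgebra`,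
whose scalar multiplication is not definitionally the coefficientwise one. -/
noncomputable local instance laurentSeriesAlgebra {k E : Type*} [CommRing k] [Field E]
    [Algebra k E] : Algebra k (LaurentSeries E) :=
  HahnSeries.instAlgebra

section Operators

variable {k E : Type*} [CommRing k] [Field E] [Algebra k E]

/-- The linear endomorphism of `E⸨ε⸩` that acts by `φ n` on the coefficient of `εⁿ`. -/
noncomputable def laurentMap (φ : ℤ → E →ₗ[k] E) : LaurentSeries E →ₗ[k] LaurentSeries E where
  toFun u :=
    { coeff := fun n => φ n (u.coeff n)
      isPWO_support' := u.isPWO_support.mono fun n hn h => hn (by simp [h]) }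
  map_add' u v := by ext n; simp
  map_smul' r u := by ext n; simp

theorem coeff_laurentMap (φ : ℤ → E →ₗ[k] E) (u : LaurentSeries E) (n : ℤ) :
    (laurentMap φ u).coeff n = φ n (u.coeff n) :=
  rfl

theorem support_laurentMap_subset (φ : ℤ → E →ₗ[k] E) (u : LaurentSeries E) :
    (laurentMap φ u).support ⊆ u.support :=
  fun n hn h => hn (by rw [coeff_laurentMap, h, map_zero])

theorem laurentMap_single (φ : ℤ → E →ₗ[k] E) (n : ℤ) (a : E) :
    laurentMap φ (HahnSeries.single n a) = HahnSeries.single n (φ n a) := by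
  ext m
  rcases eq_or_ne m n with rfl | h
  · simp [coeff_laurentMap]
  · simp [coeff_laurentMap, HahnSeries.coeff_single_of_ne h]

/-- The derivation of `E⸨ε⸩` acting by `D` on coefficients and by `ε ↦ w ε`: it maps
`∑ aₙ εⁿ` to `∑ (D aₙ + n w aₙ) εⁿ`. -/
noncomputable def laurentDerivation (D : Derivation k E E) (w : E) :
    Derivation k (LaurentSeries E) (LaurentSeries E) :=
  Derivation.mk' (laurentMap fun n => D.toLinearMap + LinearMap.mulLeft k (n * w)) fun u v => by
    ext n
    simp only [smul_eq_mul, HahnSeries.coeff_add]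
    rw [coeff_laurentMap, HahnSeries.coeff_mul, mul_comm v,
      HahnSeries.coeff_mul_right' v.isPWO_support (support_laurentMap_subset _ v),
      HahnSeries.coeff_mul_left' u.isPWO_support (support_laurentMap_subset _ u), map_sum,
      ← Finset.sum_add_distrib]
    refine Finset.sum_congr rfl fun ij hij => ?_
    rw [← (Finset.mem_antidiagonal.1 hij).2.2]
    simp only [coeff_laurentMap, LinearMap.add_apply, Derivation.coeFn_coe, LinearMap.mulLeft_apply,
      Derivation.leibniz, smul_eq_mul, Int.cast_add]
    ring

theorem coeff_laurentDerivation (D : Derivation k E E) (w : E) (u : LaurentSeries E) (n : ℤ) :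
    (laurentDerivation D w u).coeff n = D (u.coeff n) + n * w * u.coeff n :=
  rfl

theorem laurentDerivation_single (D : Derivation k E E) (w : E) (n : ℤ) (a : E) :
    laurentDerivation D w (HahnSeries.single n a) = HahnSeries.single n (D a + n * w * a) :=
  laurentMap_single _ n a

/-- The automorphism `∑ aₙ εⁿ ↦ ∑ (-1)ⁿ τ(aₙ) εⁿ` of `E⸨ε⸩`. -/
noncomputable def laurentTwist (τ : E →ₐ[k] E) : LaurentSeries E →ₐ[k] LaurentSeries E :=
  AlgHom.ofLinearMap (laurentMap fun n => LinearMap.mulLeft k ((-1) ^ n) ∘ₗ τ.toLinearMap)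
    ((laurentMap_single _ 0 1).trans (by simp)) fun u v => by
      ext n
      rw [coeff_laurentMap, HahnSeries.coeff_mul, HahnSeries.coeff_mul, map_sum]
      symm
      refine (Finset.sum_subset (fun ij hij => ?_) fun ij hij hij' => ?_).trans
        (Finset.sum_congr rfl fun ij hij => ?_)
      · rw [Finset.mem_antidiagonal] at hij ⊢
        exact ⟨support_laurentMap_subset _ u hij.1, support_laurentMap_subset _ v hij.2.1, hij.2.2⟩
      · rw [Finset.mem_antidiagonal] at hij hij'
        by_contra h
        exact hij' ⟨left_ne_zero_of_mul h, right_ne_zero_of_mul h, hij.2.2⟩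
      · rw [← (Finset.mem_antidiagonal.1 hij).2.2]
        simp only [coeff_laurentMap, LinearMap.comp_apply, LinearMap.mulLeft_apply, map_mul,
          AlgHom.toLinearMap_apply, zpow_add₀ (neg_ne_zero.2 (one_ne_zero (α := E)))]
        ring

theorem coeff_laurentTwist (τ : E →ₐ[k] E) (u : LaurentSeries E) (n : ℤ) :
    (laurentTwist τ u).coeff n = (-1) ^ n * τ (u.coeff n) :=
  rfl

theorem laurentTwist_single (τ : E →ₐ[k] E) (n : ℤ) (a : E) :
    laurentTwist τ (HahnSeries.single n a) = HahnSeries.single n ((-1) ^ n * τ a) :=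
  laurentMap_single _ n a

end Operators

namespace RationalFunction

variable {σ : Type*} (k E : Type*) [Field k] [Field E] [Algebra (MvPolynomial σ k) E]

/-- The `i`-th coordinate, as an element of the field `E` of rational functions over `k`. -/
noncomputable def coordinate (i : σ) : E :=
  algebraMap (MvPolynomial σ k) E (X i)

theorem prod_single_coordinate_pow (m : σ →₀ ℕ) :
    m.prod (fun i n => (HahnSeries.single (-1 : ℤ) (coordinate k E i)) ^ n) =
      HahnSeries.single (-m.degree : ℤ) (m.prod fun i n => coordinate k E i ^ n) := by
  classical
  induction m using Finsupp.induction_linear with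
  | zero => simp
  | add a b ha hb =>
    rw [Finsupp.prod_add_index' (by simp) (by simp [pow_add]), ha, hb,
      HahnSeries.single_mul_single, Finsupp.prod_add_index' (by simp) (by simp [pow_add]),
      map_add, Nat.cast_add, neg_add]
  | single i n => simp [HahnSeries.single_pow]

section

variable [Algebra k E] [IsScalarTower k (MvPolynomial σ k) E]

theorem algebraMap_eq_aeval_coordinate (f : MvPolynomial σ k) :
    algebraMap _ E f = aeval (coordinate k E) f := by
  have h : IsScalarTower.toAlgHom k (MvPolynomial σ k) E = aeval (coordinate k E) := by
    ext i
    simp [coordinate]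
  exact DFunLike.congr_fun h f

theorem coeff_aeval_single_coordinate (f : MvPolynomial σ k) (n : ℕ) :
    (aeval (fun i => (HahnSeries.single (-1 : ℤ) (coordinate k E i) : LaurentSeries E)) f).coeff
      (-n) = algebraMap _ E (homogeneousComponent n f) := by
  induction f using MvPolynomial.induction_on' with
  | add f g hf hg => rw [map_add, HahnSeries.coeff_add, hf, hg, map_add, map_add]
  | monomial m r =>
    rw [aeval_monomial, prod_single_coordinate_pow, HahnSeries.algebraMap_apply,
      HahnSeries.C_mul_eq_smul, HahnSeries.coeff_smul,
      homogeneousComponent_of_mem (n := m.degree) (isHomogeneous_monomial r rfl)]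
    rcases eq_or_ne n m.degree with rfl | h
    · rw [if_pos rfl, HahnSeries.coeff_single_same, algebraMap_eq_aeval_coordinate, aeval_monomial,
        smul_eq_mul]
    · rw [if_neg h, map_zero, HahnSeries.coeff_single_of_ne (by simpa using h), smul_zero]

end

variable [IsFractionRing (MvPolynomial σ k) E]

theorem coordinate_ne_zero (i : σ) : coordinate k E i ≠ 0 :=
  (map_ne_zero_iff _ (IsFractionRing.injective (MvPolynomial σ k) E)).2 (X_ne_zero i)

variable [Algebra k E] [IsScalarTower k (MvPolynomial σ k) E]

variable (σ) in
theorem adjoin_range_coordinate :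
    IntermediateField.adjoin k (Set.range (coordinate k E : σ → E)) = ⊤ := by
  refine eq_top_iff.2 fun u _ => ?_
  suffices h : ∀ f : MvPolynomial σ k, algebraMap (MvPolynomial σ k) E f ∈
      IntermediateField.adjoin k (Set.range (coordinate k E : σ → E)) by
    obtain ⟨f, g, -, rfl⟩ := IsFractionRing.div_surjective (A := MvPolynomial σ k) u
    exact div_mem (h f) (h g)
  intro f
  induction f using MvPolynomial.induction_on with
  | C r => exact IsScalarTower.algebraMap_apply k (MvPolynomial σ k) E r ▸ algebraMap_mem _ r
  | add f g hf hg => exact map_add (algebraMap (MvPolynomial σ k) E) f g ▸ add_mem hf hg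
  | mul_X f i hf =>
    rw [map_mul]
    exact mul_mem hf (IntermediateField.subset_adjoin k _ ⟨i, rfl⟩)

/-- The partial derivative of rational functions with respect to the `i`-th coordinate. -/
noncomputable def partialDeriv (i : σ) : Derivation k E E :=
  fractionDerivation E (pderiv i)

theorem partialDeriv_algebraMap (i : σ) (f : MvPolynomial σ k) :
    partialDeriv k E i (algebraMap _ E f) = algebraMap _ E (pderiv i f) :=
  fractionDerivation_algebraMap E (pderiv i) f

theorem partialDeriv_coordinate [DecidableEq σ] (i j : σ) :
    partialDeriv k E i (coordinate k E j) = if j = i then 1 else 0 := by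
  rw [coordinate, partialDeriv_algebraMap]
  split_ifs with h
  · rw [h, pderiv_X_self, map_one]
  · rw [pderiv_X_of_ne h, map_zero]

variable {k} in
/-- The substitution of algebraically independent elements for the coordinates. -/
noncomputable def substitution {F : Type*} [Field F] [Algebra k F] {v : σ → F}
    (hv : AlgebraicIndependent k v) : E →ₐ[k] F :=
  IsFractionRing.liftAlgHom (A := MvPolynomial σ k) (g := aeval v) hv

theorem substitution_coordinate {F : Type*} [Field F] [Algebra k F] {v : σ → F}
    (hv : AlgebraicIndependent k v) (i : σ) : substitution E hv (coordinate k E i) = v i := by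
  have h := IsFractionRing.lift_algebraMap (K := E)
    (show Function.Injective (aeval v : MvPolynomial σ k →ₐ[k] F).toRingHom from hv) (X i)
  exact h.trans (aeval_X v i)

theorem algebraicIndependent_mul_coordinate (s : σ → kˣ) :
    AlgebraicIndependent k fun i => algebraMap k E (s i) * coordinate k E i := by
  let scale (s : σ → kˣ) : MvPolynomial σ k →ₐ[k] MvPolynomial σ k :=
    aeval fun i => (s i : k) • X i
  have hscale : Function.LeftInverse (scale s⁻¹) (scale s) := fun f => by
    rw [comp_aeval_apply]
    simp [scale, smul_smul]
  have h : aeval (fun i => algebraMap k E (s i) * coordinate k E i) =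
      (IsScalarTower.toAlgHom k (MvPolynomial σ k) E).comp (scale s) := by
    ext i
    simp [scale, coordinate, smul_eq_C_mul, IsScalarTower.algebraMap_apply k (MvPolynomial σ k) E]
  rw [AlgebraicIndependent, h]
  exact (IsFractionRing.injective (MvPolynomial σ k) E).comp hscale.injective

/-- The endomorphism of the field of rational functions that multiplies the `i`-th coordinate
by `s i`. -/
noncomputable def rescale (s : σ → kˣ) : E →ₐ[k] E :=
  substitution E (algebraicIndependent_mul_coordinate k E s)

theorem rescale_coordinate (s : σ → kˣ) (i : σ) :
    rescale k E s (coordinate k E i) = algebraMap k E (s i) * coordinate k E i :=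
  substitution_coordinate k E _ i

variable (σ)

theorem algebraicIndependent_single_coordinate :
    AlgebraicIndependent k
      fun i : σ => (HahnSeries.single (-1 : ℤ) (coordinate k E i) : LaurentSeries E) := by
  refine (injective_iff_map_eq_zero _).2 fun f hf => ?_
  rw [← sum_homogeneousComponent f]
  refine Finset.sum_eq_zero fun n _ => IsFractionRing.injective (MvPolynomial σ k) E ?_
  rw [← coeff_aeval_single_coordinate, hf, HahnSeries.coeff_zero, map_zero]

/-- The expansion at infinity of rational functions: the substitution of `ε⁻¹ xᵢ` for the
coordinate `xᵢ`, whose value is a Laurent series in `ε`. -/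
noncomputable def expansion : E →ₐ[k] LaurentSeries E :=
  substitution E (algebraicIndependent_single_coordinate σ k E)

theorem expansion_coordinate (i : σ) :
    expansion σ k E (coordinate k E i) = HahnSeries.single (-1) (coordinate k E i) :=
  substitution_coordinate k E _ i

theorem laurentDerivation_expansion (i : σ) (u : E) :
    laurentDerivation (partialDeriv k E i) 0 (expansion σ k E u) =
      HahnSeries.single (-1) 1 * expansion σ k E (partialDeriv k E i u) := by
  classical
  refine derivation_map_eq_mul_map (adjoin_range_coordinate σ k E) (expansion σ k E) _ _ _ ?_ u
  rintro _ ⟨j, rfl⟩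
  rw [expansion_coordinate, laurentDerivation_single]
  rcases eq_or_ne j i with rfl | h <;> simp [partialDeriv_coordinate, *]

theorem laurentDerivation_euler_expansion [Fintype σ] (u : E) :
    laurentDerivation (∑ i : σ, coordinate k E i • partialDeriv k E i) 1 (expansion σ k E u) =
      0 := by
  classical
  rw [derivation_map_eq_mul_map (adjoin_range_coordinate σ k E) (expansion σ k E) 0 _ 0 ?_ u,
    zero_mul]
  rintro _ ⟨j, rfl⟩
  rw [expansion_coordinate, laurentDerivation_single, zero_mul, derivation_sum_apply,
    Finset.sum_eq_single j (fun i _ h => by simp [partialDeriv_coordinate, h.symm]) (by simp)]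
  simp [partialDeriv_coordinate]

theorem laurentTwist_expansion (u : E) :
    laurentTwist (rescale k E fun _ : σ => -1) (expansion σ k E u) = expansion σ k E u := by
  have h : Set.EqOn ((laurentTwist (rescale k E fun _ : σ => -1)).comp (expansion σ k E))
      (expansion σ k E) (IntermediateField.adjoin k (Set.range (coordinate k E : σ → E))) := by
    refine algHom_eqOn_adjoin ?_
    rintro _ ⟨i, rfl⟩
    simp [expansion_coordinate, laurentTwist_single, rescale_coordinate]
  exact h (adjoin_range_coordinate σ k E ▸ IntermediateField.mem_top)

/-- The component of degree `n` of a rational function, read off its expansion at infinity. -/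
noncomputable def component (n : ℤ) : E →ₗ[k] E where
  toFun u := (expansion σ k E u).coeff (-n)
  map_add' u v := by simp
  map_smul' r u := by simp

theorem component_apply (n : ℤ) (u : E) : component σ k E n u = (expansion σ k E u).coeff (-n) :=
  rfl

theorem component_coordinate_mul (n : ℤ) (i : σ) (u : E) :
    component σ k E n (coordinate k E i * u) = coordinate k E i * component σ k E (n - 1) u := by
  rw [component_apply, map_mul, expansion_coordinate, HahnSeries.coeff_single_mul, component_apply,
    neg_sub', sub_neg_eq_add]

theorem component_inv_coordinate_mul (n : ℤ) (i : σ) (u : E) :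
    component σ k E n ((coordinate k E i)⁻¹ * u) =
      (coordinate k E i)⁻¹ * component σ k E (n + 1) u := by
  rw [eq_inv_mul_iff_mul_eq₀ (coordinate_ne_zero k E i), ← add_sub_cancel_right n 1,
    ← component_coordinate_mul, mul_inv_cancel_left₀ (coordinate_ne_zero k E i),
    add_sub_cancel_right]

theorem partialDeriv_component (n : ℤ) (i : σ) (u : E) :
    partialDeriv k E i (component σ k E n u) = component σ k E (n - 1) (partialDeriv k E i u) := by
  have h := congrArg (HahnSeries.coeff · (-n)) (laurentDerivation_expansion σ k E i u)
  simp only [coeff_laurentDerivation, HahnSeries.coeff_single_mul, mul_zero, zero_mul, add_zero,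
    one_mul, sub_neg_eq_add] at h
  rw [component_apply, h, component_apply, neg_sub, sub_eq_neg_add]

theorem euler_component [Fintype σ] (n : ℤ) (u : E) :
    ∑ i : σ, coordinate k E i * partialDeriv k E i (component σ k E n u) =
      n * component σ k E n u := by
  have h := congrArg (HahnSeries.coeff · (-n)) (laurentDerivation_euler_expansion σ k E u)
  simp only [coeff_laurentDerivation, derivation_sum_apply, Derivation.smul_apply,
    smul_eq_mul, mul_one, Int.cast_neg, HahnSeries.coeff_zero] at h
  rw [component_apply]
  linear_combination h

theorem rescale_neg_one_component (n : ℤ) (u : E) :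
    rescale k E (fun _ : σ => -1) (component σ k E n u) = (-1) ^ n * component σ k E n u := by
  have h := congrArg (HahnSeries.coeff · (-n)) (laurentTwist_expansion σ k E u)
  simp only [coeff_laurentTwist, zpow_neg] at h
  rw [component_apply, ← h, mul_inv_cancel_left₀ (zpow_ne_zero n (neg_ne_zero.2 one_ne_zero)), h]

theorem exists_forall_component_eq_zero (u : E) : ∃ N : ℤ, ∀ n > N, component σ k E n u = 0 :=
  ⟨-(expansion σ k E u).order, fun _ hn => HahnSeries.coeff_eq_zero_of_lt_order (neg_lt.1 hn)⟩

theorem eq_zero_of_forall_component_eq_zero {u : E} (h : ∀ n, component σ k E n u = 0) : u = 0 := by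
  refine (map_eq_zero_iff (expansion σ k E) (expansion σ k E).injective).1 (HahnSeries.ext ?_)
  ext n
  simpa [component_apply] using h (-n)

end RationalFunction

end LaurentExpansion

section SquareFrame

open RationalFunction

variable {k : Type*} (E : Type*) [Field k] [Field E] [Algebra k E]
  [Algebra (MvPolynomial (Fin 3) k) E]

local notation "𝑥" => coordinate k E (0 : Fin 3)
local notation "𝑦" => coordinate k E (1 : Fin 3)
local notation "𝑧" => coordinate k E (2 : Fin 3)

/-- The quadratic functions `x² + A y²`, `y² + z²` and `y²`. -/
noncomputable def squares (A : k) : Fin 3 → E :=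
  ![𝑥 ^ 2 + A • 𝑦 ^ 2, 𝑦 ^ 2 + 𝑧 ^ 2, 𝑦 ^ 2]

variable [IsFractionRing (MvPolynomial (Fin 3) k) E] [IsScalarTower k (MvPolynomial (Fin 3) k) E]

local notation "∂𝑥" => partialDeriv k E (0 : Fin 3)
local notation "∂𝑦" => partialDeriv k E (1 : Fin 3)
local notation "∂𝑧" => partialDeriv k E (2 : Fin 3)

/-- The derivations dual to the differentials of `squares E A`. -/
noncomputable def squareFrame (A : k) : Fin 3 → Derivation k E E :=
  ![(2⁻¹ : k) • 𝑥⁻¹ • ∂𝑥, (2⁻¹ : k) • 𝑧⁻¹ • ∂𝑧,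
    (2⁻¹ : k) • (𝑦⁻¹ • ∂𝑦 - A • 𝑥⁻¹ • ∂𝑥 - 𝑧⁻¹ • ∂𝑧)]

theorem squareFrame_component (A : k) (i : Fin 3) (n : ℤ) (u : E) :
    squareFrame E A i (component (Fin 3) k E n u) =
      component (Fin 3) k E (n - 2) (squareFrame E A i u) := by
  have hn : n - 2 + 1 = n - 1 := by ring
  fin_cases i <;>
    simp [squareFrame, partialDeriv_component, component_inv_coordinate_mul, hn]

variable [CharZero k]

theorem squareFrame_squares (A : k) (i j : Fin 3) :
    squareFrame E A i (squares E A j) = if i = j then 1 else 0 := by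
  have : CharZero E := charZero_of_injective_algebraMap (algebraMap k E).injective
  have hx := coordinate_ne_zero k E (0 : Fin 3)
  have hy := coordinate_ne_zero k E (1 : Fin 3)
  have hz := coordinate_ne_zero k E (2 : Fin 3)
  fin_cases i <;> fin_cases j <;>
    simp [squareFrame, squares, partialDeriv_coordinate, Derivation.leibniz_pow, Algebra.smul_def,
      map_ofNat] <;> field_simp <;> ring

theorem derivation_eq_zero_of_squares (A : k) {D : Derivation k E E}
    (h : ∀ j, D (squares E A j) = 0) : D = 0 := by
  have : CharZero E := charZero_of_injective_algebraMap (algebraMap k E).injective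
  have hsq (i : Fin 3) : D (coordinate k E i ^ 2) = 0 := by
    have hy : D (𝑦 ^ 2) = 0 := h 2
    fin_cases i
    · simpa [squares, hy] using h 0
    · exact hy
    · simpa [squares, hy] using h 1
  refine derivation_ext (adjoin_range_coordinate (Fin 3) k E) ?_
  rintro _ ⟨i, rfl⟩
  simpa [Derivation.leibniz_pow, coordinate_ne_zero k E i] using hsq i

theorem derivation_eq_sum_squareFrame (A : k) (D : Derivation k E E) :
    D = ∑ j, D (squares E A j) • squareFrame E A j := by
  refine sub_eq_zero.1 (derivation_eq_zero_of_squares E A fun i => ?_)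
  simp [derivation_sum_apply, squareFrame_squares]

theorem squareFrame_comm (A : k) (i j : Fin 3) (u : E) :
    squareFrame E A i (squareFrame E A j u) = squareFrame E A j (squareFrame E A i u) := by
  have h : ⁅squareFrame E A i, squareFrame E A j⁆ = 0 := by
    refine derivation_eq_zero_of_squares E A fun l => ?_
    rw [Derivation.commutator_apply, squareFrame_squares, squareFrame_squares]
    split_ifs <;> simp
  rw [← sub_eq_zero, ← Derivation.commutator_apply, h, Derivation.zero_apply]

theorem squareFrame_euler_component (A : k) (n : ℤ) (u : E) :
    ∑ j, 2 * squares E A j * squareFrame E A j (component (Fin 3) k E n u) =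
      n * component (Fin 3) k E n u := by
  let e : Derivation k E E := ∑ i : Fin 3, coordinate k E i • partialDeriv k E i
  have he (u : E) : e u = ∑ i : Fin 3, coordinate k E i * partialDeriv k E i u := by
    simp [e, derivation_sum_apply]
  have hsq (i : Fin 3) : e (coordinate k E i ^ 2) = 2 * coordinate k E i ^ 2 := by
    rw [Derivation.leibniz_pow, he]
    simp [partialDeriv_coordinate, sq]
  have hsquares (j : Fin 3) : e (squares E A j) = 2 * squares E A j := by
    fin_cases j <;> simp [squares, hsq, mul_add]
  rw [← euler_component, ← he, derivation_eq_sum_squareFrame E A e]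
  simp [derivation_sum_apply, hsquares]

end SquareFrame

section LinearFactors

open Polynomial

variable {K : Type*} [Field K]

/-- The polynomial `a * X + b`. -/
noncomputable def linearPolynomial (a b : K) : K[X] :=
  Polynomial.C a * Polynomial.X + Polynomial.C b

theorem aeval_linearPolynomial {E : Type*} [Field E] [Algebra K E] (t : E) (a b : K) :
    aeval t (linearPolynomial a b) = algebraMap K E a * t + algebraMap K E b := by
  simp [linearPolynomial]

theorem natDegree_linearPolynomial {a b : K} (ha : a ≠ 0) :
    (linearPolynomial a b).natDegree = 1 :=
  natDegree_linear ha

theorem eq_zero_of_linearPolynomial_eq_zero {a b : K} (h : linearPolynomial a b = 0) :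
    a = 0 ∧ b = 0 :=
  ⟨by simpa [linearPolynomial] using congrArg (Polynomial.coeff · 1) h,
    by simpa [linearPolynomial] using congrArg (Polynomial.coeff · 0) h⟩

variable {ι : Type*} {a b : ι → K}

theorem squarefree_prod_linearPolynomial (ha : ∀ i, a i ≠ 0)
    (hab : Pairwise fun i j => a i * b j ≠ a j * b i) (S : Finset ι) :
    Squarefree (∏ i ∈ S, linearPolynomial (a i) (b i)) := by
  refine Finset.squarefree_prod_of_pairwise_isCoprime (fun i _ j _ hij => IsCoprime.isRelPrime ?_)
    fun i _ => (irreducible_of_degree_eq_one (degree_linear (ha i))).squarefree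
  have h : a i * b j - a j * b i ≠ 0 := sub_ne_zero.2 (hab hij)
  refine ⟨Polynomial.C (-(a j / (a i * b j - a j * b i))),
    Polynomial.C (a i / (a i * b j - a j * b i)), ?_⟩
  rw [← Polynomial.C_1, ← div_self h, sub_div]
  simp only [linearPolynomial, Polynomial.C_neg, Polynomial.C_sub, div_eq_mul_inv,
    Polynomial.C_mul]
  ring

theorem degree_lt_degree_derivative_prod_linearPolynomial [CharZero K] (ha : ∀ i, a i ≠ 0)
    {S : Finset ι} {q : K[X]} (hq : q.natDegree + 1 < S.card) :
    q.degree < (derivative (∏ i ∈ S, linearPolynomial (a i) (b i))).degree := by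
  have hdeg : (∏ i ∈ S, linearPolynomial (a i) (b i)).natDegree = S.card := by
    rw [natDegree_prod _ _ fun i _ =>
      ne_zero_of_natDegree_gt (natDegree_linearPolynomial (ha i)).ge]
    simp [natDegree_linearPolynomial (ha _)]
  rw [degree_derivative (by omega), hdeg]
  exact degree_le_natDegree.trans_lt (by exact_mod_cast Nat.lt_sub_of_add_lt hq)

end LinearFactors

section Constants

open RationalFunction

variable {k : Type*} (E : Type*) [Field k] [Field E] [Algebra k E]
  [Algebra (MvPolynomial (Fin 3) k) E]

local notation "𝑥" => coordinate k E (0 : Fin 3)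
local notation "𝑦" => coordinate k E (1 : Fin 3)
local notation "𝑧" => coordinate k E (2 : Fin 3)

variable [IsFractionRing (MvPolynomial (Fin 3) k) E] [IsScalarTower k (MvPolynomial (Fin 3) k) E]

/-- The field of the rational functions that are constant along `squareFrame E A 2` and invariant
under the sign changes of the coordinates. -/
noncomputable def invariantConstants (A : k) : IntermediateField k E where
  carrier := {c | squareFrame E A 2 c = 0 ∧
    ∀ s : Fin 3 → kˣ, (∀ i, s i ^ 2 = 1) → rescale k E s c = c}
  mul_mem' {a b} ha hb := ⟨by simp [ha.1, hb.1], fun s hs => by simp [ha.2 s hs, hb.2 s hs]⟩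
  add_mem' {a b} ha hb := ⟨by simp [ha.1, hb.1], fun s hs => by simp [ha.2 s hs, hb.2 s hs]⟩
  algebraMap_mem' r := ⟨Derivation.map_algebraMap _ r, fun s _ => AlgHom.commutes _ r⟩
  inv_mem' a ha := ⟨by simp [ha.1, Derivation.leibniz_inv], fun s hs => by simp [ha.2 s hs]⟩

theorem rescale_squares {s : Fin 3 → kˣ} (hs : ∀ i, s i ^ 2 = 1) (A : k) (j : Fin 3) :
    rescale k E s (squares E A j) = squares E A j := by
  have hsq (i : Fin 3) : rescale k E s (coordinate k E i ^ 2) = coordinate k E i ^ 2 := by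
    rw [map_pow, rescale_coordinate, mul_pow, ← map_pow, ← Units.val_pow_eq_pow_val, hs,
      Units.val_one, map_one, one_mul]
  fin_cases j <;> simp only [squares] <;> simp [hsq, -map_pow]

/-- The change of sign of the `i`-th coordinate. -/
noncomputable def signChange (A : k) (i : Fin 3) : E →ₐ[invariantConstants E A] E :=
  { rescale k E (Function.update 1 i (-1)) with
    commutes' := fun c => c.2.2 _ fun j => by by_cases h : j = i <;> simp [h, Function.update] }

theorem signChange_coordinate (A : k) (i j : Fin 3) :
    signChange E A i (coordinate k E j) =
      if j = i then -coordinate k E j else coordinate k E j := by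
  refine (rescale_coordinate k E _ j).trans ?_
  by_cases h : j = i <;> simp [h, Function.update]

theorem adjoin_invariantConstants_eq_top (A : k) :
    IntermediateField.adjoin (invariantConstants E A)
      (insert (𝑦 ^ 2) (Set.range (coordinate k E : Fin 3 → E))) = ⊤ := by
  rw [← IntermediateField.restrictScalars_eq_top_iff (K := k), eq_top_iff,
    ← adjoin_range_coordinate (Fin 3) k E, IntermediateField.adjoin_le_iff]
  exact (Set.subset_insert _ _).trans
    (IntermediateField.subset_adjoin (invariantConstants E A) _)

variable [CharZero k]

theorem squares_mem_invariantConstants (A : k) {j : Fin 3} (hj : j ≠ 2) :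
    squares E A j ∈ invariantConstants E A :=
  ⟨by rw [squareFrame_squares, if_neg hj.symm], fun s hs => rescale_squares E hs A j⟩

/-- `squareFrame E A 2`, as a derivation over its field of constants. -/
noncomputable def invariantDerivation (A : k) : Derivation (invariantConstants E A) E E :=
  Derivation.mk'
    { toFun := squareFrame E A 2
      map_add' := map_add _
      map_smul' := fun c u => by simp [Algebra.smul_def, c.2.1] }
    fun u v => by simp

theorem squares_ne_zero (A : k) (j : Fin 3) : squares E A j ≠ 0 := fun h =>
  one_ne_zero (α := E) (by simpa [h] using (squareFrame_squares E A j j).symm)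

theorem eq_zero_of_smul_squares_eq_smul_squares (A : k) {a b : k}
    (h : a • squares E A 0 = b • squares E A 1) : a = 0 ∧ b = 0 := by
  have h0 := congrArg (squareFrame E A 0) h
  have h1 := congrArg (squareFrame E A 1) h
  rw [Derivation.map_smul, Derivation.map_smul, squareFrame_squares, squareFrame_squares] at h0 h1
  simpa [Algebra.smul_def] using And.intro h0 h1.symm

/-- The slopes of the coordinates squared, as affine functions of `y²` over
`invariantConstants E A`. -/
noncomputable def sqSlope (A : k) : Fin 3 → invariantConstants E A :=
  ![-algebraMap k _ A, 1, -1]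

/-- The constant terms of the coordinates squared, as affine functions of `y²` over
`invariantConstants E A`. -/
noncomputable def sqIntercept (A : k) : Fin 3 → invariantConstants E A :=
  ![⟨_, squares_mem_invariantConstants E A (j := 0) (by decide)⟩, 0,
    ⟨_, squares_mem_invariantConstants E A (j := 1) (by decide)⟩]

theorem coordinate_sq_eq (A : k) (i : Fin 3) :
    coordinate k E i ^ 2 = sqSlope E A i * 𝑦 ^ 2 + sqIntercept E A i := by
  fin_cases i <;> simp [sqSlope, sqIntercept, squares, Algebra.smul_def]

theorem sqSlope_ne_zero {A : k} (hA : A ≠ 0) (i : Fin 3) : sqSlope E A i ≠ 0 := by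
  fin_cases i <;> simp [sqSlope, hA]

theorem sqSlope_mul_sqIntercept_ne (A : k) :
    Pairwise fun i j => sqSlope E A i * sqIntercept E A j ≠ sqSlope E A j * sqIntercept E A i := by
  have h0 : squares E A 0 ≠ 0 := squares_ne_zero E A 0
  have h1 : squares E A 1 ≠ 0 := squares_ne_zero E A 1
  have h01 : squares E A 0 ≠ algebraMap k E A * squares E A 1 := fun h => one_ne_zero
    (eq_zero_of_smul_squares_eq_smul_squares E A
      (a := 1) (b := A) (by simp [h, Algebra.smul_def])).1
  intro i j hij h
  replace h := congrArg Subtype.val h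
  fin_cases i <;> fin_cases j <;> simp [sqSlope, sqIntercept] at hij h <;> grind

/-- The field of rational functions arises from the field of rational functions in `y²` over
`invariantConstants E A` by adjoining the square roots `x`, `y` and `z`. -/
noncomputable def coordinateExtension {A : k} (hA : A ≠ 0) :
    MultiquadraticExtension (invariantConstants E A) E (Fin 3) where
  t := 𝑦 ^ 2
  d := invariantDerivation E A
  d_t := (squareFrame_squares E A 2 2).trans (if_pos rfl)
  x := coordinate k E
  p i := linearPolynomial (sqSlope E A i) (sqIntercept E A i)
  x_sq i := by
    rw [aeval_linearPolynomial]
    exact coordinate_sq_eq E A i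
  natDegree_ne_zero i := by
    rw [natDegree_linearPolynomial (sqSlope_ne_zero E hA i)]; exact one_ne_zero
  squarefree_prod :=
    squarefree_prod_linearPolynomial (sqSlope_ne_zero E hA) (sqSlope_mul_sqIntercept_ne E A) _
  sign := signChange E A
  sign_t i := by rw [map_pow, signChange_coordinate]; split_ifs <;> simp
  sign_x_self i := by rw [signChange_coordinate, if_pos rfl]
  sign_x_of_ne i j h := by rw [signChange_coordinate, if_neg h]
  adjoin_eq_top := adjoin_invariantConstants_eq_top E A

variable {E} {A : k}

theorem mem_invariantConstants_of_squareFrame_eq_zero (hA : A ≠ 0) {u : E}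
    (hu : squareFrame E A 2 u = 0) :
    u ∈ invariantConstants E A := by
  obtain ⟨c, rfl⟩ := (coordinateExtension E hA).exists_algebraMap_eq_of_d_eq_zero hu
  exact c.2

theorem eq_zero_of_mul_squareFrame_eq_add (hA : A ≠ 0) {u a b : E}
    (ha : squareFrame E A 2 a = 0) (hb : squareFrame E A 2 b = 0)
    (h : 𝑥 * 𝑦 * 𝑧 * squareFrame E A 2 u = a + b * 𝑦 ^ 2) :
    a = 0 ∧ b = 0 := by
  lift a to invariantConstants E A using mem_invariantConstants_of_squareFrame_eq_zero hA ha
  lift b to invariantConstants E A using mem_invariantConstants_of_squareFrame_eq_zero hA hb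
  have hq := (coordinateExtension E hA).eq_zero_of_monomial_mul_d_eq_aeval (S := Finset.univ)
    (q := linearPolynomial b a) (u := u)
    (degree_lt_degree_derivative_prod_linearPolynomial (sqSlope_ne_zero E hA)
      ((Nat.succ_le_succ Polynomial.natDegree_linear_le).trans_lt (by decide)))
    (by
      rw [aeval_linearPolynomial, MultiquadraticExtension.monomial, Fin.prod_univ_three]
      exact h.trans (add_comm _ _))
  obtain ⟨hb, ha⟩ := eq_zero_of_linearPolynomial_eq_zero hq
  exact ⟨congrArg Subtype.val ha, congrArg Subtype.val hb⟩

theorem eq_zero_of_mul_squareFrame_eq (hA : A ≠ 0) {u a : E} (ha : squareFrame E A 2 a = 0)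
    (h : 𝑥 * 𝑧 * squareFrame E A 2 u = a) : a = 0 := by
  lift a to invariantConstants E A using mem_invariantConstants_of_squareFrame_eq_zero hA ha
  have hq := (coordinateExtension E hA).eq_zero_of_monomial_mul_d_eq_aeval (S := {0, 2})
    (q := Polynomial.C a) (u := u)
    (degree_lt_degree_derivative_prod_linearPolynomial (sqSlope_ne_zero E hA) (by simp)) (by
      rw [Polynomial.aeval_C, MultiquadraticExtension.monomial, Finset.prod_pair (by decide)]
      exact h)
  exact congrArg Subtype.val (Polynomial.C_eq_zero.1 hq)

end Constants

section Descent

open RationalFunction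

variable {k : Type*} (E : Type*) [Field k] [Field E] [Algebra k E]
  [Algebra (MvPolynomial (Fin 3) k) E] [IsFractionRing (MvPolynomial (Fin 3) k) E]
  [IsScalarTower k (MvPolynomial (Fin 3) k) E]

local notation "𝑥" => coordinate k E (0 : Fin 3)
local notation "𝑦" => coordinate k E (1 : Fin 3)
local notation "𝑧" => coordinate k E (2 : Fin 3)
local notation "∂𝑥" => partialDeriv k E (0 : Fin 3)
local notation "∂𝑦" => partialDeriv k E (1 : Fin 3)
local notation "∂𝑧" => partialDeriv k E (2 : Fin 3)

/-- The Glukhovsky–Dolzhansky vector field, as a derivation of the field of rational functions. -/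
noncomputable def gdField (A C s Ra : k) : Derivation k E E :=
  (A • (𝑦 * 𝑧) + C • 𝑧 - s • 𝑥) • ∂𝑥 + (-(𝑥 * 𝑧) + algebraMap k E Ra - 𝑦) • ∂𝑦 +
    (-𝑧 + 𝑥 * 𝑦) • ∂𝑧

/-- The closed `1`-forms that vanish on the Glukhovsky–Dolzhansky vector field, given by their
values `P` on `squareFrame E A`. -/
structure IsFirstIntegralForm (A C s Ra : k) (P : Fin 3 → E) : Prop where
  closed : ∀ i j, squareFrame E A i (P j) = squareFrame E A j (P i)
  sum_gdField_mul : ∑ j, gdField E A C s Ra (squares E A j) * P j = 0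

theorem gdField_squares (A C s Ra : k) :
    gdField E A C s Ra ∘ squares E A =
      ![2 * (C • (𝑥 * 𝑧) - s • 𝑥 ^ 2 - A • 𝑦 ^ 2 + (A * Ra) • 𝑦),
        2 * (Ra • 𝑦 - 𝑦 ^ 2 - 𝑧 ^ 2),
        2 * (Ra • 𝑦 - 𝑦 ^ 2 - 𝑥 * 𝑦 * 𝑧)] := by
  funext j
  fin_cases j <;>
    simp [gdField, squares, partialDeriv_coordinate, Derivation.leibniz_pow, Algebra.smul_def] <;>
    ring

variable {E} {A C s Ra : k} {m : ℤ} {P : Fin 3 → E}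

variable (k) in
/-- The homogeneous parts of degree greater than `m` of the functions `P j` vanish. -/
def HasDegreeLE (P : Fin 3 → E) (m : ℤ) : Prop :=
  ∀ n > m, ∀ j, component (Fin 3) k E n (P j) = 0

theorem eq_zero_of_squareFrame_eq_zero_of_odd [CharZero k] (hA : A ≠ 0) {u : E}
    (hu : squareFrame E A 2 u = 0) (hodd : rescale k E (fun _ : Fin 3 => -1) u = -u) : u = 0 := by
  have : CharZero E := charZero_of_injective_algebraMap (algebraMap k E).injective
  exact self_eq_neg.1 (((mem_invariantConstants_of_squareFrame_eq_zero hA hu).2 _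
    fun _ => even_two.neg_one_pow).symm.trans hodd)

theorem squareFrame_coordinate_one [CharZero k] (A : k) (i : Fin 3) :
    squareFrame E A i 𝑦 = if i = 2 then (2 * 𝑦)⁻¹ else 0 := by
  have : CharZero E := charZero_of_injective_algebraMap (algebraMap k E).injective
  have h : squareFrame E A i (𝑦 ^ 2) = if i = 2 then 1 else 0 := squareFrame_squares E A i 2
  rw [Derivation.leibniz_pow] at h
  have hy := coordinate_ne_zero k E (1 : Fin 3)
  split_ifs at h ⊢ with hi
  · exact eq_inv_of_mul_eq_one_right (by simpa [mul_assoc] using h)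
  · simpa [hy] using h

namespace IsFirstIntegralForm

theorem squareFrame_component_comm (hP : IsFirstIntegralForm E A C s Ra P) (n : ℤ) (i j : Fin 3) :
    squareFrame E A i (component (Fin 3) k E n (P j)) =
      squareFrame E A j (component (Fin 3) k E n (P i)) := by
  rw [squareFrame_component, squareFrame_component, hP.closed]

variable (A P) in
/-- For `n ≠ 0`, a primitive of the part of degree `n - 2` of the closed form with values `P` on
`squareFrame E A`, obtained by contraction with the Euler field. -/
noncomputable def primitive (n : ℤ) : E :=
  (n : k)⁻¹ • ∑ j, 2 * squares E A j * component (Fin 3) k E (n - 2) (P j)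

theorem rescale_neg_one_primitive (n : ℤ) :
    rescale k E (fun _ : Fin 3 => -1) (primitive A P n) = (-1) ^ n * primitive A P n := by
  simp only [primitive, map_smul, map_sum, map_mul, map_ofNat, mul_smul_comm, Finset.mul_sum,
    rescale_neg_one_component, rescale_squares E (s := fun _ => -1) fun _ => even_two.neg_one_pow]
  congr! 2 with j
  rw [zpow_sub₀ (by simp)]
  simp
  ring

variable [CharZero k]

theorem xyz_mul_component (hP : IsFirstIntegralForm E A C s Ra P) (n : ℤ) :
    𝑥 * 𝑦 * 𝑧 * component (Fin 3) k E n (P 2) =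
      (C • (𝑥 * 𝑧) - s • 𝑥 ^ 2 - A • 𝑦 ^ 2) * component (Fin 3) k E (n + 1) (P 0)
      - (𝑦 ^ 2 + 𝑧 ^ 2) * component (Fin 3) k E (n + 1) (P 1)
      - 𝑦 ^ 2 * component (Fin 3) k E (n + 1) (P 2)
      + Ra • 𝑦 * (A • component (Fin 3) k E (n + 2) (P 0) + component (Fin 3) k E (n + 2) (P 1) +
        component (Fin 3) k E (n + 2) (P 2)) := by
  have : CharZero E := charZero_of_injective_algebraMap (algebraMap k E).injective
  have h := hP.sum_gdField_mul
  have hV (j : Fin 3) := congrFun (gdField_squares E A C s Ra) j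
  simp only [Function.comp_apply] at hV
  rw [Fin.sum_univ_three, hV, hV, hV] at h
  have key : 𝑥 * (𝑦 * (𝑧 * P 2)) =
      C • (𝑥 * (𝑧 * P 0)) - s • (𝑥 * (𝑥 * P 0)) - A • (𝑦 * (𝑦 * P 0))
      - 𝑦 * (𝑦 * P 1) - 𝑧 * (𝑧 * P 1) - 𝑦 * (𝑦 * P 2)
      + Ra • (A • (𝑦 * P 0) + 𝑦 * P 1 + 𝑦 * P 2) := by
    refine mul_left_cancel₀ (two_ne_zero' E) (sub_eq_zero.1 ?_)
    rw [← neg_eq_zero, ← h]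
    simp [Algebra.smul_def]
    ring
  have e1 : n + 3 - 1 = n + 2 := by ring
  have e2 : n + 2 - 1 = n + 1 := by ring
  have h3 := congrArg (component (Fin 3) k E (n + 3)) key
  simp only [map_add, map_sub, map_smul, component_coordinate_mul, e1, e2, add_sub_cancel_right]
    at h3
  simp only [Algebra.smul_def] at h3 ⊢
  linear_combination h3

theorem squareFrame_primitive (hP : IsFirstIntegralForm E A C s Ra P) {n : ℤ} (hn : n ≠ 0)
    (i : Fin 3) :
    squareFrame E A i (primitive A P n) = component (Fin 3) k E (n - 2) (P i) := by
  have hterm (j : Fin 3) :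
      squareFrame E A i (2 * squares E A j * component (Fin 3) k E (n - 2) (P j)) =
        2 * squares E A j * squareFrame E A j (component (Fin 3) k E (n - 2) (P i)) +
          if i = j then 2 * component (Fin 3) k E (n - 2) (P j) else 0 := by
    have h2 : squareFrame E A i 2 = 0 := mod_cast Derivation.map_natCast (squareFrame E A i) 2
    rw [Derivation.leibniz, Derivation.leibniz, squareFrame_squares, hP.squareFrame_component_comm]
    split_ifs <;> simp [h2, mul_comm]
  rw [primitive, Derivation.map_smul, map_sum, Finset.sum_congr rfl fun j _ => hterm j,
    Finset.sum_add_distrib, squareFrame_euler_component, Finset.sum_ite_eq,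
    if_pos (Finset.mem_univ i), inv_smul_eq_iff₀ (Int.cast_ne_zero.2 hn), Algebra.smul_def,
    map_intCast]
  push_cast
  ring

theorem component_two_eq_zero (hP : IsFirstIntegralForm E A C s Ra P) (hm : HasDegreeLE k P m) :
    component (Fin 3) k E m (P 2) = 0 := by
  have h := hP.xyz_mul_component m
  simpa [hm (m + 1) (by lia), hm (m + 2) (by lia), coordinate_ne_zero] using h

theorem squareFrame_two_component_eq_zero (hP : IsFirstIntegralForm E A C s Ra P)
    (hm : HasDegreeLE k P m) (j : Fin 3) :
    squareFrame E A 2 (component (Fin 3) k E m (P j)) = 0 := by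
  rw [hP.squareFrame_component_comm, hP.component_two_eq_zero hm, map_zero]

theorem component_eq_zero_of_odd (hP : IsFirstIntegralForm E A C s Ra P) (hA : A ≠ 0)
    (hm : HasDegreeLE k P m) (hodd : Odd m) (j : Fin 3) :
    component (Fin 3) k E m (P j) = 0 := by
  refine eq_zero_of_squareFrame_eq_zero_of_odd hA (hP.squareFrame_two_component_eq_zero hm j) ?_
  rw [rescale_neg_one_component, hodd.neg_one_zpow, neg_one_mul]

theorem xyz_mul_squareFrame (hP : IsFirstIntegralForm E A C s Ra P)
    (hm : HasDegreeLE k P m) (hm1 : m ≠ -1) :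
    𝑥 * 𝑦 * 𝑧 * squareFrame E A 2
        (primitive A P (m + 1) - (2 * C) • (component (Fin 3) k E m (P 0) * 𝑦)) =
      -(s • (squares E A 0 * component (Fin 3) k E m (P 0)) +
        squares E A 1 * component (Fin 3) k E m (P 1)) +
      (A * (s - 1)) • component (Fin 3) k E m (P 0) * 𝑦 ^ 2 := by
  have : CharZero E := charZero_of_injective_algebraMap (algebraMap k E).injective
  have hy := coordinate_ne_zero k E (1 : Fin 3)
  have h := hP.xyz_mul_component (m - 1)
  have e : m - 1 + 2 = m + 1 := by ring
  simp only [sub_add_cancel, e, hm (m + 1) (lt_add_one m), hP.component_two_eq_zero hm, smul_zero,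
    add_zero, mul_zero, sub_zero] at h
  have hu : squareFrame E A 2
      (primitive A P (m + 1) - (2 * C) • (component (Fin 3) k E m (P 0) * 𝑦)) =
      component (Fin 3) k E (m - 1) (P 2) - C • (component (Fin 3) k E m (P 0) * 𝑦⁻¹) := by
    have e' : m + 1 - 2 = m - 1 := by ring
    rw [map_sub, hP.squareFrame_primitive (by lia), e', Derivation.map_smul, Derivation.leibniz,
      squareFrame_coordinate_one, if_pos rfl, hP.squareFrame_two_component_eq_zero hm]
    simp [Algebra.smul_def, map_ofNat]
    field_simp
  rw [hu, mul_sub, h]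
  simp [squares, Algebra.smul_def]
  field_simp
  ring

theorem leading_relations (hP : IsFirstIntegralForm E A C s Ra P) (hA : A ≠ 0)
    (hm : HasDegreeLE k P m) (hm1 : m ≠ -1) :
    s • (squares E A 0 * component (Fin 3) k E m (P 0)) +
        squares E A 1 * component (Fin 3) k E m (P 1) = 0 ∧
      (A * (s - 1)) • component (Fin 3) k E m (P 0) = 0 := by
  have h2 := hP.squareFrame_two_component_eq_zero hm
  have h := eq_zero_of_mul_squareFrame_eq_add hA ?_ ?_ (hP.xyz_mul_squareFrame hm hm1)
  · exact h.imp_left neg_eq_zero.1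
  · simp [h2, squareFrame_squares]
  · simp [h2]

theorem component_eq_zero_of_component_zero_eq_zero (hP : IsFirstIntegralForm E A C s Ra P)
    (hA : A ≠ 0) (hm : HasDegreeLE k P m) (hm1 : m ≠ -1)
    (h0 : component (Fin 3) k E m (P 0) = 0) (j : Fin 3) : component (Fin 3) k E m (P j) = 0 := by
  have h1 : component (Fin 3) k E m (P 1) = 0 := by
    have h := (hP.leading_relations hA hm hm1).1
    rw [h0, mul_zero, smul_zero, zero_add] at h
    exact (mul_eq_zero.1 h).resolve_left (squares_ne_zero E A 1)
  fin_cases j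
  exacts [h0, h1, hP.component_two_eq_zero hm]

theorem component_eq_zero_of_ne_one (hP : IsFirstIntegralForm E A C s Ra P) (hA : A ≠ 0)
    (hs : s ≠ 1) (hm : HasDegreeLE k P m) (hm1 : m ≠ -1) (j : Fin 3) :
    component (Fin 3) k E m (P j) = 0 :=
  hP.component_eq_zero_of_component_zero_eq_zero hA hm hm1
    ((smul_eq_zero.1 (hP.leading_relations hA hm hm1).2).resolve_left
      (mul_ne_zero hA (sub_ne_zero.2 hs))) j

theorem component_eq_zero_of_ne_neg_two (hP : IsFirstIntegralForm E A C 1 Ra P) (hA : A ≠ 0)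
    (hm : HasDegreeLE k P m) (hm1 : m ≠ -1) (hm2 : m ≠ -2) (j : Fin 3) :
    component (Fin 3) k E m (P j) = 0 := by
  have h : primitive A P (m + 2) = 0 := by
    have h := (hP.leading_relations hA hm hm1).1
    rw [one_smul] at h
    rw [primitive, Fin.sum_univ_three, add_sub_cancel_right, hP.component_two_eq_zero hm, mul_zero,
      add_zero, mul_assoc, mul_assoc, ← mul_add, h, mul_zero, smul_zero]
  rw [← add_sub_cancel_right m 2, ← hP.squareFrame_primitive (by lia), h, map_zero]

theorem primitive_neg_one (hP : IsFirstIntegralForm E A C 1 Ra P) (hA : A ≠ 0)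
    (hm : HasDegreeLE k P (-2)) :
    primitive A P (-1) = (2 * C) • (component (Fin 3) k E (-2) (P 0) * 𝑦) := by
  obtain ⟨h0, h1⟩ := hP.leading_relations hA hm (by decide)
  have h := hP.xyz_mul_squareFrame hm (by decide)
  rw [h0, h1] at h
  refine sub_eq_zero.1 (eq_zero_of_squareFrame_eq_zero_of_odd hA
    (u := primitive A P (-1) - (2 * C) • (component (Fin 3) k E (-2) (P 0) * 𝑦)) ?_ ?_)
  · simpa [coordinate_ne_zero] using h
  · rw [map_sub, map_smul, map_mul, rescale_neg_one_primitive, rescale_neg_one_component,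
      rescale_coordinate, neg_sub', sub_neg_eq_add]
    simp

theorem component_neg_three (hP : IsFirstIntegralForm E A C 1 Ra P) (hA : A ≠ 0)
    (hm : HasDegreeLE k P (-2)) (i : Fin 3) :
    component (Fin 3) k E (-3) (P i) =
      (2 * C) • (component (Fin 3) k E (-2) (P 0) * squareFrame E A i 𝑦 +
        𝑦 * squareFrame E A i (component (Fin 3) k E (-2) (P 0))) := by
  have h := hP.squareFrame_primitive (n := -1) (by decide) i
  rwa [hP.primitive_neg_one hA hm, Derivation.map_smul, Derivation.leibniz, smul_eq_mul,
    smul_eq_mul, eq_comm] at h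

theorem xz_mul_squareFrame (hP : IsFirstIntegralForm E A C 1 Ra P) (hA : A ≠ 0)
    (hm : HasDegreeLE k P (-2)) :
    𝑥 * 𝑧 * squareFrame E A 2 (primitive A P (-2) -
        (2 * C ^ 2) • (squareFrame E A 0 (component (Fin 3) k E (-2) (P 0)) * 𝑦 ^ 2)) =
      (C + A * Ra) • component (Fin 3) k E (-2) (P 0) +
        Ra • component (Fin 3) k E (-2) (P 1) := by
  have : CharZero E := charZero_of_injective_algebraMap (algebraMap k E).injective
  have hy := coordinate_ne_zero k E (1 : Fin 3)
  have h2 := hP.squareFrame_two_component_eq_zero hm 0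
  have hu : squareFrame E A 2 (primitive A P (-2) -
      (2 * C ^ 2) • (squareFrame E A 0 (component (Fin 3) k E (-2) (P 0)) * 𝑦 ^ 2)) =
      component (Fin 3) k E (-4) (P 2) -
        (2 * C ^ 2) • squareFrame E A 0 (component (Fin 3) k E (-2) (P 0)) := by
    have hy2 : squareFrame E A 2 (𝑦 ^ 2) = 1 := squareFrame_squares E A 2 2
    rw [map_sub, hP.squareFrame_primitive (by decide), Derivation.map_smul, Derivation.leibniz,
      squareFrame_comm, h2, hy2, map_zero, smul_zero, add_zero, smul_eq_mul, mul_one]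
    rfl
  have heuler := squareFrame_euler_component E A (-2) (P 0)
  have hgraded := hP.xyz_mul_component (-4)
  have e1 : (-4 + 1 : ℤ) = -3 := rfl
  have e2 : (-4 + 2 : ℤ) = -2 := rfl
  rw [Fin.sum_univ_three, h2] at heuler
  rw [e1, e2, hP.component_two_eq_zero hm, hP.component_neg_three hA hm,
    hP.component_neg_three hA hm, hP.component_neg_three hA hm, h2] at hgraded
  simp only [squareFrame_coordinate_one, squares, Algebra.smul_def, Fin.reduceEq, ↓reduceIte,
    Matrix.cons_val, Matrix.cons_val_zero, Matrix.cons_val_one, map_one, one_mul, mul_zero,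
    zero_add, add_zero, map_mul, map_ofNat, mul_inv_rev, Int.cast_neg, Int.cast_ofNat]
    at hgraded heuler
  field_simp at hgraded
  rw [hu]
  simp only [Algebra.smul_def, map_mul, map_add, map_pow, map_ofNat]
  linear_combination hgraded - algebraMap k E C * heuler

theorem component_neg_two_eq_zero (hP : IsFirstIntegralForm E A C 1 Ra P) (hA : A ≠ 0)
    (hCRa : C ≠ 0 ∨ Ra ≠ 0) (hm : HasDegreeLE k P (-2)) (j : Fin 3) :
    component (Fin 3) k E (-2) (P j) = 0 := by
  have h := (hP.leading_relations hA hm (by decide)).1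
  have h' := eq_zero_of_mul_squareFrame_eq hA
    (by simp [hP.squareFrame_two_component_eq_zero hm]) (hP.xz_mul_squareFrame hA hm)
  refine hP.component_eq_zero_of_component_zero_eq_zero hA hm (by decide) ?_ j
  by_contra h0
  have hI : Ra • squares E A 0 = (C + A * Ra) • squares E A 1 := by
    refine mul_right_cancel₀ h0 ?_
    simp only [Algebra.smul_def, map_one] at h h' ⊢
    linear_combination algebraMap k E Ra * h - squares E A 1 * h'
  obtain ⟨rfl, hC⟩ := eq_zero_of_smul_squares_eq_smul_squares E A hI
  rw [mul_zero, add_zero] at hC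
  exact hCRa.elim (absurd hC) (absurd rfl)

theorem component_eq_zero (hP : IsFirstIntegralForm E A C s Ra P) (hA : A ≠ 0)
    (hs : s = 1 → C ≠ 0 ∨ Ra ≠ 0) (hm : HasDegreeLE k P m) (j : Fin 3) :
    component (Fin 3) k E m (P j) = 0 := by
  rcases Int.even_or_odd m with hm_even | hm_odd
  · have hm1 : m ≠ -1 := by rintro rfl; exact absurd hm_even (by decide)
    rcases ne_or_eq s 1 with hs1 | rfl
    · exact hP.component_eq_zero_of_ne_one hA hs1 hm hm1 j
    · rcases eq_or_ne m (-2) with rfl | hm2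
      · exact hP.component_neg_two_eq_zero hA (hs rfl) hm j
      · exact hP.component_eq_zero_of_ne_neg_two hA hm hm1 hm2 j
  · exact hP.component_eq_zero_of_odd hA hm hm_odd j

theorem eq_zero (hP : IsFirstIntegralForm E A C s Ra P) (hA : A ≠ 0)
    (hs : s = 1 → C ≠ 0 ∨ Ra ≠ 0) (j : Fin 3) : P j = 0 := by
  choose N hN using fun j => exists_forall_component_eq_zero (Fin 3) k E (P j)
  obtain ⟨B, hB⟩ := Set.finite_range N |>.bddAbove
  have hdeg (m : ℤ) (hm : m ≤ B) : HasDegreeLE k P m := by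
    induction m, hm using Int.leInductionDown with
    | base => exact fun n hn j => hN j n ((hB ⟨j, rfl⟩).trans_lt hn)
    | pred m _ ih =>
      intro n hn j
      obtain rfl | hn := (Int.sub_one_lt_iff.1 hn).eq_or_lt
      exacts [hP.component_eq_zero hA hs ih j, ih n hn j]
  exact eq_zero_of_forall_component_eq_zero (Fin 3) k E fun n =>
    hdeg _ (min_le_left B (n - 1)) n (by lia) j

end IsFirstIntegralForm

end Descent

section ClosedForm

variable {k E : Type*} [Field k] [Field E] [Algebra k E]
  [Algebra (MvPolynomial (Fin 3) k) E] [IsFractionRing (MvPolynomial (Fin 3) k) E]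
  [IsScalarTower k (MvPolynomial (Fin 3) k) E] [CharZero k]

theorem closedForm_eq_zero_of_gdField {A C s Ra : k} (hA : A ≠ 0)
    (hs : s = 1 → C ≠ 0 ∨ Ra ≠ 0) {ω : Derivation k E E →ₗ[E] E}
    (hclosed : ∀ D D', ω ⁅D, D'⁆ = D (ω D') - D' (ω D)) (hω : ω (gdField E A C s Ra) = 0) :
    ω = 0 := by
  have hP : IsFirstIntegralForm E A C s Ra fun j => ω (squareFrame E A j) := by
    refine ⟨fun i j => ?_, ?_⟩
    · rw [← sub_eq_zero, ← hclosed]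
      have h : ⁅squareFrame E A i, squareFrame E A j⁆ = 0 := by
        ext u
        rw [Derivation.commutator_apply, squareFrame_comm, sub_self, Derivation.zero_apply]
      rw [h, map_zero]
    · rw [derivation_eq_sum_squareFrame E A (gdField E A C s Ra), map_sum] at hω
      simpa only [map_smul, smul_eq_mul] using hω
  ext D
  rw [derivation_eq_sum_squareFrame E A D, map_sum]
  simp [hP.eq_zero hA hs]

end ClosedForm

/-- The data of a Darboux function `∏ i, |f i| ^ lam i * exp (g / h)`. -/
structure DarbouxFunction (k σ ι : Type*) [Field k] where
  exponent : ι → k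
  factor : ι → MvPolynomial σ k
  num : MvPolynomial σ k
  den : MvPolynomial σ k
  factor_ne_zero : ∀ i, factor i ≠ 0
  den_ne_zero : den ≠ 0

namespace DarbouxFunction

section Algebra

variable {k σ ι : Type*} [Field k] [Fintype ι] (F : DarbouxFunction k σ ι)

/-- The logarithmic derivative along `δ` of the Darboux function, multiplied by
`(∏ i, f i) * h ^ 2`. -/
noncomputable def logDerivNumerator [DecidableEq ι] (δ : MvPolynomial σ k → MvPolynomial σ k) :
    MvPolynomial σ k :=
  F.den ^ 2 * ∑ i, C (F.exponent i) * δ (F.factor i) * ∏ j ∈ Finset.univ.erase i, F.factor j +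
    (∏ i, F.factor i) * (F.den * δ F.num - F.num * δ F.den)

theorem map_logDerivNumerator [DecidableEq ι] {L : Type*} [Field L] (φ : MvPolynomial σ k →+* L)
    (hf : ∀ i, φ (F.factor i) ≠ 0) (hh : φ F.den ≠ 0)
    (δ : MvPolynomial σ k → MvPolynomial σ k) :
    φ (F.logDerivNumerator δ) = (∏ i, φ (F.factor i)) * φ F.den ^ 2 *
      (∑ i, φ (C (F.exponent i)) * ((φ (F.factor i))⁻¹ * φ (δ (F.factor i))) +
        (φ F.den ^ 2)⁻¹ * (φ F.den * φ (δ F.num) - φ F.num * φ (δ F.den))) := by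
  have hfactor (i : ι) : ∏ j ∈ Finset.univ.erase i, φ (F.factor j) =
      (∏ j, φ (F.factor j)) * (φ (F.factor i))⁻¹ := by
    rw [← Finset.mul_prod_erase _ _ (Finset.mem_univ i), mul_comm, inv_mul_cancel_left₀ (hf i)]
  simp only [logDerivNumerator, map_add, map_mul, map_sub, map_pow, map_sum, map_prod, hfactor,
    mul_add, Finset.mul_sum]
  congr 1
  · exact Finset.sum_congr rfl fun i _ => by ring
  · field_simp

variable (E : Type*) [Field E] [Algebra k E] [Algebra (MvPolynomial σ k) E]

/-- The logarithmic differential of the Darboux function, as a `1`-form over the field of rational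
functions. -/
noncomputable def logForm : Derivation k E E →ₗ[E] E where
  toFun D := ∑ i, F.exponent i • ((algebraMap _ E (F.factor i))⁻¹ * D (algebraMap _ E (F.factor i)))
    + D (algebraMap _ E F.num / algebraMap _ E F.den)
  map_add' D D' := by simp [mul_add, Finset.sum_add_distrib]; ring
  map_smul' a D := by simp [mul_add, Finset.mul_sum, mul_left_comm]

theorem logForm_apply (D : Derivation k E E) : F.logForm E D =
    ∑ i, F.exponent i • ((algebraMap _ E (F.factor i))⁻¹ * D (algebraMap _ E (F.factor i))) +
      D (algebraMap _ E F.num / algebraMap _ E F.den) :=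
  rfl

theorem logForm_commutator (D D' : Derivation k E E) :
    F.logForm E ⁅D, D'⁆ = D (F.logForm E D') - D' (F.logForm E D) := by
  simp only [logForm_apply, map_add, map_sum, Derivation.map_smul, Derivation.leibniz,
    Derivation.leibniz_inv, Derivation.commutator_apply, add_sub_add_comm, ← Finset.sum_sub_distrib,
    ← smul_sub]
  congr! 3
  simp
  ring

variable [IsFractionRing (MvPolynomial σ k) E] [IsScalarTower k (MvPolynomial σ k) E]

theorem logForm_eq_zero_iff [DecidableEq ι] {D : Derivation k E E}
    {δ : MvPolynomial σ k → MvPolynomial σ k}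
    (hD : ∀ u, D (algebraMap _ E u) = algebraMap _ E (δ u)) :
    F.logForm E D = 0 ↔ F.logDerivNumerator δ = 0 := by
  have hinj := FaithfulSMul.algebraMap_injective (MvPolynomial σ k) E
  have hne {u : MvPolynomial σ k} (hu : u ≠ 0) : algebraMap _ E u ≠ 0 :=
    (map_ne_zero_iff _ hinj).2 hu
  rw [← map_eq_zero_iff _ hinj, F.map_logDerivNumerator _ (fun i => hne (F.factor_ne_zero i))
    (hne F.den_ne_zero)]
  rw [mul_eq_zero_iff_left]
  · rw [logForm_apply, Derivation.leibniz_div]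
    simp [hD, Algebra.smul_def, IsScalarTower.algebraMap_apply k (MvPolynomial σ k) E]
  · simp [Finset.prod_ne_zero_iff, hne, F.factor_ne_zero, F.den_ne_zero]

end Algebra

end DarbouxFunction

section PolynomialDifferential

variable {𝕜 σ : Type*} [NontriviallyNormedField 𝕜] [Fintype σ]

/-- The differential of a polynomial function at the point `q`. -/
noncomputable def polynomialDifferential (u : MvPolynomial σ 𝕜) (q : σ → 𝕜) : (σ → 𝕜) →L[𝕜] 𝕜 :=
  ∑ i, eval q (pderiv i u) • ContinuousLinearMap.proj i

theorem polynomialDifferential_apply (u : MvPolynomial σ 𝕜) (q v : σ → 𝕜) :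
    polynomialDifferential u q v = ∑ i, eval q (pderiv i u) * v i := by
  simp [polynomialDifferential]

theorem hasFDerivAt_eval (u : MvPolynomial σ 𝕜) (q : σ → 𝕜) :
    HasFDerivAt (fun q => eval q u) (polynomialDifferential u q) q := by
  classical
  induction u using MvPolynomial.induction_on with
  | C a =>
    simp only [eval_C]
    refine (hasFDerivAt_const a q).congr_fderiv (ContinuousLinearMap.ext fun v => ?_)
    simp [polynomialDifferential_apply]
  | add u v hu hv =>
    simp only [map_add]
    refine (hu.fun_add hv).congr_fderiv (ContinuousLinearMap.ext fun v => ?_)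
    simp [polynomialDifferential_apply, add_mul, Finset.sum_add_distrib]
  | mul_X u i hu =>
    simp only [map_mul, eval_X]
    refine (hu.mul (hasFDerivAt_apply i q)).congr_fderiv (ContinuousLinearMap.ext fun v => ?_)
    simp [polynomialDifferential_apply, pderiv_X, Pi.single_apply, apply_ite, add_mul,
      Finset.sum_add_distrib, Finset.mul_sum, mul_assoc]

theorem eval_pderiv_eq_polynomialDifferential [DecidableEq σ] (u : MvPolynomial σ 𝕜) (q : σ → 𝕜)
    (i : σ) : eval q (pderiv i u) = polynomialDifferential u q (Pi.single i 1) := by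
  simp [polynomialDifferential_apply, Pi.single_apply]

end PolynomialDifferential

namespace DarbouxFunction

section Analysis

variable {σ ι : Type*} (F : DarbouxFunction ℝ σ ι)

/-- The open set on which the Darboux function is smooth and positive. -/
def domain : Set (σ → ℝ) :=
  {q | (∀ i, eval q (F.factor i) ≠ 0) ∧ eval q F.den ≠ 0}

theorem isOpen_domain [Finite ι] : IsOpen F.domain := by
  have h (u : MvPolynomial σ ℝ) : IsOpen {q | eval q u ≠ 0} :=
    isOpen_ne_fun u.continuous_eval continuous_const
  simpa only [domain, Set.ofPred_and, Set.ofPred_forall] using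
    (isOpen_iInter_of_finite fun i => h (F.factor i)).inter (h F.den)

variable [Fintype ι]

/-- The real function `∏ i, |f i| ^ lam i * exp (g / h)`. -/
noncomputable def toFun (q : σ → ℝ) : ℝ :=
  (∏ i, |eval q (F.factor i)| ^ F.exponent i) * Real.exp (eval q F.num / eval q F.den)

theorem toFun_eq_exp {q : σ → ℝ} (hq : q ∈ F.domain) : F.toFun q =
    Real.exp (∑ i, F.exponent i * Real.log (eval q (F.factor i)) +
      eval q F.num / eval q F.den) := by
  rw [toFun, Real.exp_add, Real.exp_sum]
  congr! 2 with i
  rw [Real.rpow_def_of_pos (abs_pos.2 (hq.1 i)), Real.log_abs, mul_comm]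

variable [Fintype σ]

/-- The differential of the logarithm of the Darboux function. -/
noncomputable def logDifferential (q : σ → ℝ) : (σ → ℝ) →L[ℝ] ℝ :=
  ∑ i, F.exponent i • ((eval q (F.factor i))⁻¹ • polynomialDifferential (F.factor i) q) +
    (eval q F.den ^ 2)⁻¹ •
      (eval q F.den • polynomialDifferential F.num q -
        eval q F.num • polynomialDifferential F.den q)

theorem hasFDerivAt_toFun {q : σ → ℝ} (hq : q ∈ F.domain) :
    HasFDerivAt F.toFun (F.toFun q • F.logDifferential q) q := by
  have hfactors := HasFDerivAt.fun_sum fun i (_ : i ∈ Finset.univ) =>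
    ((hasFDerivAt_eval (F.factor i) q).log (hq.1 i)).const_mul (F.exponent i)
  have hinv := (hasDerivAt_inv hq.2).comp_hasFDerivAt q (hasFDerivAt_eval F.den q)
  have hlog : HasFDerivAt (fun q => ∑ i, F.exponent i * Real.log (eval q (F.factor i)) +
      eval q F.num / eval q F.den) (F.logDifferential q) q := by
    refine (hfactors.fun_add ((hasFDerivAt_eval F.num q).mul hinv)).congr_fderiv ?_
    rw [logDifferential]
    congr 1
    ext v
    have hden := hq.2
    simp only [add_apply, sub_apply, smul_apply, smul_eq_mul, Function.comp_apply]
    field_simp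
    ring
  rw [toFun_eq_exp F hq]
  exact hlog.exp.congr_of_eventuallyEq <|
    Filter.eventually_of_mem (F.isOpen_domain.mem_nhds hq) fun _ => F.toFun_eq_exp

theorem eval_logDerivNumerator [DecidableEq ι] {δ : MvPolynomial σ ℝ → MvPolynomial σ ℝ}
    {q v : σ → ℝ} (hδ : ∀ u, eval q (δ u) = polynomialDifferential u q v) (hq : q ∈ F.domain) :
    eval q (F.logDerivNumerator δ) =
      (∏ i, eval q (F.factor i)) * eval q F.den ^ 2 * F.logDifferential q v := by
  rw [F.map_logDerivNumerator (eval q) hq.1 hq.2]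
  simp [logDifferential, hδ]

theorem logDerivNumerator_eq_zero [DecidableEq ι] {δ : MvPolynomial σ ℝ → MvPolynomial σ ℝ}
    {V : (σ → ℝ) → σ → ℝ} (hδ : ∀ q u, eval q (δ u) = polynomialDifferential u q (V q))
    (hV : ∀ q ∈ F.domain, fderiv ℝ F.toFun q (V q) = 0) : F.logDerivNumerator δ = 0 := by
  have hmul : F.logDerivNumerator δ * ((∏ i, F.factor i) * F.den) = 0 := by
    refine MvPolynomial.funext fun q => ?_
    by_cases hq : q ∈ F.domain
    · have hlog : F.logDifferential q (V q) = 0 := by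
        simpa [(F.hasFDerivAt_toFun hq).fderiv, F.toFun_eq_exp hq] using hV q hq
      rw [map_mul, F.eval_logDerivNumerator (hδ q) hq, hlog, mul_zero, zero_mul, map_zero]
    · have hprod : (∏ i, eval q (F.factor i)) * eval q F.den = 0 := by
        contrapose! hq
        simpa [domain, Finset.prod_eq_zero_iff, not_or] using hq
      simp [hprod]
  exact (mul_eq_zero.1 hmul).resolve_right <|
    mul_ne_zero (Finset.prod_ne_zero_iff.2 fun i _ => F.factor_ne_zero i) F.den_ne_zero

theorem logDifferential_eq_zero [DecidableEq ι] (hF : ∀ i, F.logDerivNumerator (pderiv i) = 0)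
    {q : σ → ℝ} (hq : q ∈ F.domain) : F.logDifferential q = 0 := by
  classical
  refine ContinuousLinearMap.coe_injective <| LinearMap.pi_ext' fun i => LinearMap.ext_ring ?_
  have h := F.eval_logDerivNumerator (fun u => eval_pderiv_eq_polynomialDifferential u q i) hq
  simpa [hF, Finset.prod_eq_zero_iff, hq.1, hq.2] using h

end Analysis

theorem isLocallyConstant_toFun {σ ι : Type*} [Finite σ] [Fintype ι] [DecidableEq ι]
    (F : DarbouxFunction ℝ σ ι) (hF : ∀ i, F.logDerivNumerator (pderiv i) = 0) :
    IsLocallyConstant fun q : F.domain => F.toFun q := fun t => by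
  cases nonempty_fintype σ
  have hderiv {q : σ → ℝ} (hq : q ∈ F.domain) :
      HasFDerivAt F.toFun (0 : (σ → ℝ) →L[ℝ] ℝ) q := by
    simpa [F.logDifferential_eq_zero hF hq] using F.hasFDerivAt_toFun hq
  have hopen := F.isOpen_domain.isOpen_inter_preimage_of_fderiv_eq_zero
    (fun q hq => (hderiv hq).differentiableAt.differentiableWithinAt)
    (fun q hq => (hderiv hq).fderiv) t
  have hpreimage : (fun q : F.domain => F.toFun q) ⁻¹' t = (↑) ⁻¹' (F.domain ∩ F.toFun ⁻¹' t) := by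
    ext q
    simp
  exact hpreimage ▸ hopen.preimage continuous_subtype_val

end DarbouxFunction

/-- The vector field of the Glukhovsky–Dolzhansky system. -/
def gdVectorField (A C σ Ra : ℝ) (q : Fin 3 → ℝ) : Fin 3 → ℝ :=
  ![A * q 1 * q 2 + C * q 2 - σ * q 0, -(q 0 * q 2) + Ra - q 1, -q 2 + q 0 * q 1]

theorem eval_gdDeriv (A C σ Ra : ℝ) (q : Fin 3 → ℝ) (u : MvPolynomial (Fin 3) ℝ) :
    eval q (gdDeriv A C σ Ra u) = polynomialDifferential u q (gdVectorField A C σ Ra q) := by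
  simp [gdDeriv, polynomialDifferential_apply, Fin.sum_univ_three, gdVectorField, mul_comm]

theorem gdField_algebraMap (E : Type*) [Field E] [Algebra ℝ E] [Algebra (MvPolynomial (Fin 3) ℝ) E]
    [IsFractionRing (MvPolynomial (Fin 3) ℝ) E] [IsScalarTower ℝ (MvPolynomial (Fin 3) ℝ) E]
    (A C σ Ra : ℝ) (u : MvPolynomial (Fin 3) ℝ) :
    gdField E A C σ Ra (algebraMap _ E u) = algebraMap _ E (gdDeriv A C σ Ra u) := by
  simp [gdField, gdDeriv, RationalFunction.partialDeriv_algebraMap, RationalFunction.coordinate,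
    Algebra.smul_def, IsScalarTower.algebraMap_apply ℝ (MvPolynomial (Fin 3) ℝ) E, mul_assoc]

theorem gd_no_darboux_first_integral_general {A C σ Ra : ℝ} (hA : A ≠ 0)
    (hσ : σ = 1 → C ≠ 0 ∨ Ra ≠ 0) {ι : Type*} [Fintype ι] (F : DarbouxFunction ℝ (Fin 3) ι)
    (hF : ∀ q ∈ F.domain, fderiv ℝ F.toFun q (gdVectorField A C σ Ra q) = 0) :
    IsLocallyConstant fun q : F.domain => F.toFun q := by
  classical
  let E := FractionRing (MvPolynomial (Fin 3) ℝ)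
  have hgd : F.logForm E (gdField E A C σ Ra) = 0 :=
    (F.logForm_eq_zero_iff E (gdField_algebraMap E A C σ Ra)).2
      (F.logDerivNumerator_eq_zero (eval_gdDeriv A C σ Ra) hF)
  have hzero := closedForm_eq_zero_of_gdField hA hσ (F.logForm_commutator E) hgd
  refine F.isLocallyConstant_toFun fun i => ?_
  rw [← F.logForm_eq_zero_iff E (RationalFunction.partialDeriv_algebraMap ℝ E i), hzero,
    LinearMap.zero_apply]

/-- For positive parameters, the Glukhovsky–Dolzhansky system admits no
nonconstant Darboux first integral: any function of the form
`Φ = ∏ᵢ |fᵢ|^{λᵢ} · exp(g/h)` whose directional derivative along the vector field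
vanishes on the open set `U` where all `fᵢ` and `h` are nonvanishing is locally
constant on `U`. -/
theorem gd_no_darboux_first_integral
    (A C σ Ra : ℝ) (hA : 0 < A) (hC : 0 < C) (hσ : 0 < σ) (hRa : 0 < Ra)
    (p : ℕ) (f : Fin p → MvPolynomial (Fin 3) ℝ) (hf : ∀ i, f i ≠ 0)
    (lam : Fin p → ℝ)
    (g h : MvPolynomial (Fin 3) ℝ) (hh : h ≠ 0) (hcop : IsRelPrime g h)
    (U : Set (Fin 3 → ℝ))
    (hU : U = {q | (∀ i, MvPolynomial.eval q (f i) ≠ 0) ∧ MvPolynomial.eval q h ≠ 0})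
    (Φ : (Fin 3 → ℝ) → ℝ)
    (hΦ : ∀ q, Φ q =
      (∏ i, |MvPolynomial.eval q (f i)| ^ lam i) *
        Real.exp (MvPolynomial.eval q g / MvPolynomial.eval q h))
    (V : (Fin 3 → ℝ) → (Fin 3 → ℝ))
    (hV : ∀ q, V q =
      ![A * q 1 * q 2 + C * q 2 - σ * q 0, -(q 0 * q 2) + Ra - q 1, -q 2 + q 0 * q 1])
    (hfirstintegral : ∀ q ∈ U, fderiv ℝ Φ q (V q) = 0) :
    IsLocallyConstant (fun q : U => Φ q) := by
  obtain ⟨rfl, rfl, rfl⟩ := And.intro hU (And.intro (funext hΦ) (funext hV))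
  exact gd_no_darboux_first_integral_general hA.ne' (fun _ => .inl hC.ne')
    ⟨lam, f, g, h, hf, hh⟩ hfirstintegral
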